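/- arXiv:1511.01128 — 7 statements merged into one kernel-verified Lean document; each statement's English description precedes it below -/
import Mathlib

section
/- Let (R_0, R_1, ..., R_ℓ, R_{ℓ+1}=0) be the subresultant PRS of A and B, and assume it is normal, i.e. d_{i-1} = d_i + 1 for all 1 ≤ i ≤ ℓ. Let G be a primitive greatest common divisor of A and B in D[x]. Then for every i with 2 ≤ i ≤ ℓ, the power lc(G)^{2(i-1)} divides the content cont(R_i). -/
open Polynomial

section helpers
variable {K : Type*} [CommRing K]

/-- stacked rows -/
noncomputable def rowsF (a b : K[X]) (p : ℕ) (r : ℕ) : K[X] :=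
  if r < p then X ^ r * a else X ^ (r - p) * b

/-- minors -/
noncomputable def Dt (N : ℕ) (rows : ℕ → K[X]) (e : ℕ → ℕ) : K :=
  (Matrix.of fun i j : Fin N => (rows i).coeff (e j)).det

lemma Dt_congr (N : ℕ) (f g : ℕ → K[X]) (e : ℕ → ℕ) (h : ∀ r < N, f r = g r) :
    Dt N f e = Dt N g e := by
  unfold Dt
  congr 1
  ext i j
  simp [h i i.2]

lemma Dt_update (N : ℕ) (f : ℕ → K[X]) (e : ℕ → ℕ) (t u v : ℕ) (ht : t < N) (hu : u < N)
    (hv : v < N) (hut : u ≠ t) (hvt : v ≠ t) (c x y : K) :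
    Dt N (Function.update f t (c • f t + x • f u + y • f v)) e = c * Dt N f e := by
  unfold Dt
  set M : Matrix (Fin N) (Fin N) K := Matrix.of fun i j : Fin N => (f i).coeff (e j) with hM
  have h1 : (Matrix.of fun i j : Fin N =>
      ((Function.update f t (c • f t + x • f u + y • f v)) i).coeff (e j)) =
      ((M.updateRow ⟨t, ht⟩ (c • M ⟨t, ht⟩)).updateRow ⟨t, ht⟩
        ((M.updateRow ⟨t, ht⟩ (c • M ⟨t, ht⟩)) ⟨t, ht⟩ +
          x • (M.updateRow ⟨t, ht⟩ (c • M ⟨t, ht⟩)) ⟨u, hu⟩)).updateRow ⟨t, ht⟩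
        (((M.updateRow ⟨t, ht⟩ (c • M ⟨t, ht⟩)).updateRow ⟨t, ht⟩
        ((M.updateRow ⟨t, ht⟩ (c • M ⟨t, ht⟩)) ⟨t, ht⟩ +
          x • (M.updateRow ⟨t, ht⟩ (c • M ⟨t, ht⟩)) ⟨u, hu⟩)) ⟨t, ht⟩ +
          y • ((M.updateRow ⟨t, ht⟩ (c • M ⟨t, ht⟩)).updateRow ⟨t, ht⟩
        ((M.updateRow ⟨t, ht⟩ (c • M ⟨t, ht⟩)) ⟨t, ht⟩ +
          x • (M.updateRow ⟨t, ht⟩ (c • M ⟨t, ht⟩)) ⟨u, hu⟩)) ⟨v, hv⟩) := by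
    ext i j
    by_cases hi : i = ⟨t, ht⟩
    · subst hi
      simp [Matrix.updateRow_apply, hut, hvt, hM, Fin.ext_iff]
    · have : (i : ℕ) ≠ t := fun h => hi (Fin.ext h)
      simp [Matrix.updateRow_apply, hi, this, hM]
  rw [h1, Matrix.det_updateRow_add_smul_self, Matrix.det_updateRow_add_smul_self,
    Matrix.det_updateRow_smul, Matrix.updateRow_eq_self]
  · simpa [Fin.ext_iff] using hut.symm
  · simpa [Fin.ext_iff] using hvt.symm

lemma Dt_rowop (N p : ℕ) (a b T : K[X]) (c x y : K) (e : ℕ → ℕ)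
    (hT : T = C c * a + (C x * X + C y) * b) (hN : 2 * p < N) :
    Dt N (rowsF T b p) e = c ^ p * Dt N (rowsF a b p) e := by
  have key : ∀ t ≤ p, Dt N (fun r => if r < t then X ^ r * T else rowsF a b p r) e =
      c ^ t * Dt N (rowsF a b p) e := by
    intro t
    induction t with
    | zero => intro _; simp
    | succ t ih =>
      intro ht
      rw [pow_succ', mul_assoc, ← ih (by omega),
        ← Dt_update N _ e t (p + t + 1) (p + t) (by omega) (by omega) (by omega) (by omega)
          (by omega) c x y]
      apply Dt_congr
      intro r _
      by_cases hr : r = t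
      · subst hr
        have h1 : p + r + 1 - p = r + 1 := by omega
        have h2 : p + r - p = r := by omega
        have h3 : ¬ (p + r + 1 < r) := by omega
        have h4 : ¬ (p + r + 1 < p) := by omega
        have h5 : r < p := by omega
        simp [rowsF, h1, h3, h4, h5, hT, Polynomial.smul_eq_C_mul]
        ring
      · have : r < t + 1 ↔ r < t := by omega
        simp [hr, this]
  rw [← key p le_rfl]
  apply Dt_congr
  intro r _
  by_cases h : r < p <;> simp [rowsF, h]

lemma Dt_strip (N : ℕ) (f : ℕ → K[X]) (e : ℕ → ℕ) (h : ∀ r < N, (f r).coeff (e N) = 0) :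
    Dt (N + 1) f e = (f N).coeff (e N) * Dt N f e := by
  unfold Dt
  rw [Matrix.det_succ_column _ (Fin.last N), Finset.sum_eq_single (Fin.last N)]
  · simp only [Fin.val_last, Matrix.of_apply, ← two_mul, pow_mul]
    simp only [even_two, Even.neg_pow, one_pow, one_mul]
    congr 2
    ext i j
    simp
  · intro i _ hi
    have : (i : ℕ) < N := by
      have := i.2
      have h2 : (i : ℕ) ≠ N := fun h => hi (Fin.ext (by simpa using h))
      omega
    simp [h _ this]
  · simp

lemma Dt_swap (p q : ℕ) (a b : K[X]) (e : ℕ → ℕ) :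
    ∃ ε : K, (ε = 1 ∨ ε = -1) ∧
      Dt (p + q) (rowsF a b p) e = ε * Dt (p + q) (rowsF b a q) e := by
  let σ : Equiv.Perm (Fin (p + q)) := (finCongr (add_comm p q)).trans finAddFlip
  have h := Matrix.det_permute σ
    (Matrix.of fun i j : Fin (p + q) => (rowsF a b p i).coeff (e j))
  have h2 : (Matrix.of fun i j : Fin (p + q) => (rowsF a b p i).coeff (e j)).submatrix σ id =
      Matrix.of fun i j : Fin (p + q) => (rowsF b a q i).coeff (e j) := by
    ext ⟨i, hi⟩ j
    have : rowsF a b p (σ ⟨i, hi⟩) = rowsF b a q i := by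
      by_cases hq : i < q
      · have : σ ⟨i, hi⟩ = ⟨p + i, by omega⟩ := by
          simp only [σ, Equiv.trans_apply]
          exact finAddFlip_apply_mk_left hq
        rw [this]; simp [rowsF, hq]
      · have : σ ⟨i, hi⟩ = ⟨i - q, by omega⟩ := by
          simp only [σ, Equiv.trans_apply]
          exact finAddFlip_apply_mk_right (k := i) (by omega) (by omega)
        rw [this]
        have : i - q < p := by omega
        simp [rowsF, hq, this]
    simp [this]
  rw [h2] at h
  unfold Dt
  rcases Int.units_eq_one_or (Equiv.Perm.sign σ) with hs | hs
  · exact ⟨1, Or.inl rfl, by rw [h, hs]; simp⟩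
  · exact ⟨-1, Or.inr rfl, by rw [h, hs]; simp⟩

lemma coeff_shift (b : K[X]) (n r j : ℕ) (hb : b.natDegree ≤ n) (h : n + r < j) :
    (X ^ r * b).coeff j = 0 := by
  rw [coeff_X_pow_mul']
  split_ifs
  · exact coeff_eq_zero_of_natDegree_lt (by omega)
  · rfl

/-- column selector -/
def colE (J L : ℕ) (j : ℕ) : ℕ := if j = 0 then J else L + j

lemma Dt_strip2 (k L J : ℕ) (b T : K[X]) (hb : b.natDegree ≤ L + k + 1)
    (hT : T.natDegree ≤ L + k) :
    Dt (2 * k + 3) (rowsF T b (k + 1)) (colE J L) =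
      b.coeff (L + k + 1) ^ 2 * Dt (2 * k + 1) (rowsF T b (k + 1)) (colE J L) := by
  have e1 : colE J L (2 * k + 2) = L + k + 1 + (k + 1) := by simp [colE]; omega
  have e2 : colE J L (2 * k + 1) = L + k + 1 + k := by simp [colE]; omega
  have f1 : rowsF T b (k + 1) (2 * k + 2) = X ^ (k + 1) * b := by
    have : 2 * k + 2 - (k + 1) = k + 1 := by omega
    have h : ¬ (2 * k + 2 < k + 1) := by omega
    simp only [rowsF, this, h, if_false]
  have f2 : rowsF T b (k + 1) (2 * k + 1) = X ^ k * b := by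
    have : 2 * k + 1 - (k + 1) = k := by omega
    have h : ¬ (2 * k + 1 < k + 1) := by omega
    simp only [rowsF, this, h, if_false]
  rw [Dt_strip, Dt_strip, e1, e2, f1, f2, coeff_X_pow_mul, coeff_X_pow_mul]
  · ring
  · intro r hr
    rw [e2, rowsF]
    split_ifs
    · exact coeff_shift T (L + k) _ _ hT (by omega)
    · exact coeff_shift b _ _ _ hb (by omega)
  · intro r hr
    rw [e1, rowsF]
    split_ifs
    · exact coeff_shift T (L + k) _ _ hT (by omega)
    · exact coeff_shift b _ _ _ hb (by omega)

end helpers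

lemma Dt_smul {K : Type*} [Field K] (N p : ℕ) (T b : K[X]) (c : K) (e : ℕ → ℕ)
    (hN : 2 * p < N) :
    Dt N (rowsF (C c * T) b p) e = c ^ p * Dt N (rowsF T b p) e :=
  Dt_rowop N p T b _ c 0 0 e (by simp) hN

lemma Dt_step {K : Type*} [Field K] (k L J : ℕ) (a b T q : K[X]) (c c' : K)
    (ha : a.natDegree ≤ L + k + 2)
    (hb : b.natDegree = L + k + 1) (hT : T.natDegree ≤ L + k)
    (h : C c * a = q * b + C c' * T) :
    ∃ ε : K, (ε = 1 ∨ ε = -1) ∧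
      c ^ (k + 1) * Dt (2 * (k + 1) + 1) (rowsF a b (k + 1)) (colE J L) =
        ε * (c' ^ (k + 1) * b.leadingCoeff ^ 2 * Dt (2 * k + 1) (rowsF b T k) (colE J L)) := by
  have hb0 : b ≠ 0 := by rintro rfl; simp at hb
  have hq : q.natDegree ≤ 1 := by
    by_cases hq0 : q = 0
    · simp [hq0]
    have h1 : q * b = C c * a - C c' * T := by rw [h]; ring
    have h2 := natDegree_mul hq0 hb0
    have h3 : (C c * a - C c' * T).natDegree ≤ L + k + 2 := by
      refine (natDegree_sub_le _ _).trans (max_le ?_ ?_)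
      · exact (natDegree_C_mul_le _ _).trans ha
      · exact (natDegree_C_mul_le _ _).trans (by omega)
    rw [← h1] at h3
    omega
  obtain ⟨x, y, hxy⟩ := exists_eq_X_add_C_of_natDegree_le_one hq
  have h1 := Dt_rowop (2 * (k + 1) + 1) (k + 1) a b (C c' * T) c (-x) (-y) (colE J L)
    (by
      have : C c' * T = C c * a - q * b := by rw [h]; ring
      rw [this, hxy]; simp only [map_neg]; ring) (by omega)
  rw [Dt_smul _ _ _ _ _ _ (by omega)] at h1
  have h2 := Dt_strip2 k L J b T hb.le hT
  obtain ⟨ε, hε, h3⟩ := Dt_swap (k + 1) k T b (colE J L)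
  refine ⟨ε, hε, ?_⟩
  have e3 : k + 1 + k = 2 * k + 1 := by ring
  rw [e3] at h3
  have e4 : 2 * (k + 1) + 1 = 2 * k + 3 := by ring
  rw [e4] at h1 ⊢
  rw [← h1, h2, h3, leadingCoeff, hb]
  ring

lemma Dt_chain {K : Type*} [Field K] (L J i : ℕ) (S : ℕ → K[X]) (t : ℕ → K)
    (ht : ∀ j, 1 ≤ j → t (j + 1) = (S j).leadingCoeff)
    (hdeg : ∀ j ≤ i, (S j).natDegree = L + (i - j))
    (hne : ∀ j ≤ i, S j ≠ 0)
    (hrec : ∀ j, 1 ≤ j → j < i → ∃ q : K[X],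
      C ((S j).leadingCoeff ^ 2) * S (j - 1) = q * S j + C (t j ^ 2) * S (j + 1)) :
    ∀ k j, 1 ≤ j → j + k = i → ∃ ε : K, (ε = 1 ∨ ε = -1) ∧
      t j ^ (2 * k) * (S i).coeff J =
        ε * Dt (2 * k + 1) (rowsF (S (j - 1)) (S j) k) (colE J L) := by
  intro k
  induction k with
  | zero =>
    intro j _ hj
    obtain rfl : j = i := by omega
    exact ⟨1, Or.inl rfl, by simp [Dt, rowsF, colE]⟩
  | succ k ih =>
    intro j hj hji
    obtain ⟨ε, hε, h1⟩ := ih (j + 1) (by omega) (by omega)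
    obtain ⟨q, hq⟩ := hrec j hj (by omega)
    obtain ⟨ε', hε', h2⟩ := Dt_step k L J (S (j - 1)) (S j) (S (j + 1)) q _ _
      (by rw [hdeg _ (by omega)]; omega) (by rw [hdeg _ (by omega)]; omega)
      (by rw [hdeg _ (by omega)]; omega) hq
    have hs : (S j).leadingCoeff ≠ 0 := leadingCoeff_ne_zero.mpr (hne j (by omega))
    rw [ht j hj, Nat.add_sub_cancel] at h1
    have hee : ε * ε = 1 := by rcases hε with rfl | rfl <;> ring
    have hee' : ε' * ε' = 1 := by rcases hε' with rfl | rfl <;> ring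
    refine ⟨ε * ε', ?_, ?_⟩
    · rcases hε with rfl | rfl <;> rcases hε' with rfl | rfl <;> simp
    · apply mul_left_cancel₀ (pow_ne_zero (2 * (k + 1)) hs)
      generalize (S j).leadingCoeff = s at *
      generalize Dt (2 * k + 1) (rowsF (S j) (S (j + 1)) k) (colE J L) = X1 at *
      generalize Dt (2 * (k + 1) + 1) (rowsF (S (j - 1)) (S j) (k + 1)) (colE J L) = X2 at *
      have e1 : s ^ (2 * (k + 1)) = s ^ 2 * s ^ (2 * k) := by ring
      have e2 : s ^ (2 * (k + 1)) = (s ^ 2) ^ (k + 1) := by ring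
      calc s ^ (2 * (k + 1)) * (t j ^ (2 * (k + 1)) * (S i).coeff J)
          = s ^ 2 * t j ^ (2 * (k + 1)) * (s ^ (2 * k) * (S i).coeff J) := by rw [e1]; ring
        _ = s ^ 2 * t j ^ (2 * (k + 1)) * (ε * X1) := by rw [h1]
        _ = ε * (ε' * ε') * ((t j ^ 2) ^ (k + 1) * s ^ 2 * X1) := by rw [hee']; ring
        _ = ε * ε' * (ε' * ((t j ^ 2) ^ (k + 1) * s ^ 2 * X1)) := by ring
        _ = ε * ε' * ((s ^ 2) ^ (k + 1) * X2) := by rw [h2]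
        _ = _ := by rw [e2]; ring

lemma Dt_map {D K : Type*} [CommRing D] [CommRing K] (φ : D →+* K) (N p : ℕ) (a b : D[X])
    (e : ℕ → ℕ) : Dt N (rowsF (a.map φ) (b.map φ) p) e = φ (Dt N (rowsF a b p) e) := by
  unfold Dt
  rw [RingHom.map_det]
  congr 1
  ext i j
  simp only [Matrix.of_apply, RingHom.mapMatrix_apply, Matrix.map_apply, rowsF]
  split_ifs <;> simp [← coeff_map]

/-- Let `D` be a UFD with a normalized gcd and fraction field `K`, and let
`A, B ∈ D[x]` be nonzero with `deg A ≥ deg B ≥ 1`.  Let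
`(R 0, R 1, …, R ℓ, R (ℓ+1) = 0)` be the subresultant PRS of `A` and `B` (with
quotients `Q i`, multipliers `α i`, `β i` given by the subresultant formulas via the
auxiliary sequence `ψ i`, degrees `d i = deg (R i)`, and all terms lying in `D[x]` as
witnessed by `R' i`), and assume it is normal, i.e. `d (i-1) = d i + 1` for
`1 ≤ i ≤ ℓ`.  Let `G` be a primitive greatest common divisor of `A` and `B` in `D[x]`.
Then for every `i` with `2 ≤ i ≤ ℓ`, `lc(G)^(2(i-1))` divides `cont (R i)`. -/
theorem stmt_0 {D : Type*} [CommRing D] [IsDomain D] [NormalizedGCDMonoid D]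
    [UniqueFactorizationMonoid D]
    (A B G : Polynomial D) (hA : A ≠ 0) (hB : B ≠ 0)
    (hdeg : B.natDegree ≤ A.natDegree) (hB1 : 1 ≤ B.natDegree)
    -- the subresultant PRS `R 0 = A, R 1 = B, …, R ℓ ≠ 0, R (ℓ+1) = 0` of `A` and `B`
    -- over the fraction field `K` of `D`, with quotients `Q i`, scalars `α i, β i`,
    -- degrees `d i`, the auxiliary sequence `ψ i`, and terms `R' i` in `D[x]`
    (ℓ : ℕ) (R Q : ℕ → Polynomial (FractionRing D))
    (α β ψ : ℕ → FractionRing D)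
    (R' : ℕ → Polynomial D) (d : ℕ → ℕ)
    (hR0 : R 0 = A.map (algebraMap D (FractionRing D)))
    (hR1 : R 1 = B.map (algebraMap D (FractionRing D)))
    (hRne : ∀ i, i ≤ ℓ → R i ≠ 0)
    (hRlast : R (ℓ + 1) = 0)
    (hd : ∀ i, d i = (R i).natDegree)
    (hαne : ∀ i, 1 ≤ i → i ≤ ℓ → α i ≠ 0)
    (hβne : ∀ i, 1 ≤ i → i ≤ ℓ → β i ≠ 0)
    (hdesc : ∀ i, 1 ≤ i → i ≤ ℓ → (R (i + 1)).degree < (R i).degree)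
    (hrec : ∀ i, 1 ≤ i → i ≤ ℓ → α i • R (i - 1) = Q i * R i + β i • R (i + 1))
    (hα : ∀ i, 1 ≤ i → i ≤ ℓ → α i = (R i).leadingCoeff ^ (d (i - 1) - d i + 1))
    (hψ1 : ψ 1 = -1)
    (hψ : ∀ i, 2 ≤ i → i ≤ ℓ →
      ψ i = (-(R (i - 1)).leadingCoeff) ^ (d (i - 2) - d (i - 1)) /
        ψ (i - 1) ^ (d (i - 2) - d (i - 1) - 1))
    (hβ1 : β 1 = (-1) ^ (d 0 - d 1 + 1))
    (hβ : ∀ i, 2 ≤ i → i ≤ ℓ →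
      β i = -(R (i - 1)).leadingCoeff * ψ i ^ (d (i - 1) - d i))
    (hR' : ∀ i, i ≤ ℓ + 1 → (R' i).map (algebraMap D (FractionRing D)) = R i)
    -- normality
    (hnormal : ∀ i, 1 ≤ i → i ≤ ℓ → d (i - 1) = d i + 1)
    -- `G` is a primitive greatest common divisor of `A` and `B` in `D[x]`
    (hGA : G ∣ A) (hGB : G ∣ B)
    (hGgreatest : ∀ G' : Polynomial D, G' ∣ A → G' ∣ B → G' ∣ G)
    (hGprim : G.IsPrimitive) :
    ∀ i, 2 ≤ i → i ≤ ℓ → G.leadingCoeff ^ (2 * (i - 1)) ∣ (R' i).content := by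
  intro i hi2 hiℓ
  set φ := algebraMap D (FractionRing D) with hφ
  have hinj : Function.Injective φ := IsFractionRing.injective D (FractionRing D)
  obtain ⟨a, rfl⟩ := hGA
  obtain ⟨b, rfl⟩ := hGB
  have hG0 : G ≠ 0 := left_ne_zero_of_mul hA
  set H := G.map φ with hH
  have hH0 : H ≠ 0 := (Polynomial.map_ne_zero_iff hinj).mpr hG0
  set γ := φ G.leadingCoeff with hγ
  have hHlc : H.leadingCoeff = γ := leadingCoeff_map_of_injective hinj G
  have hγ0 : γ ≠ 0 := by rw [← hHlc]; exact leadingCoeff_ne_zero.mpr hH0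
  have hα' : ∀ j, 1 ≤ j → j ≤ ℓ → α j = (R j).leadingCoeff ^ 2 := by
    intro j h1 h2
    rw [hα j h1 h2, hnormal j h1 h2]
    congr 1
    omega
  have hβ1' : β 1 = 1 := by
    rw [hβ1, show d 0 = d 1 + 1 from hnormal 1 le_rfl (by omega)]
    simp
  have hβ' : ∀ j, 2 ≤ j → j ≤ ℓ → β j = (R (j - 1)).leadingCoeff ^ 2 := by
    intro j h1 h2
    have h3 : d (j - 2) = d (j - 1) + 1 := hnormal (j - 1) (by omega) (by omega)
    have h4 := hnormal j (by omega) h2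
    rw [hβ j h1 h2, hψ j h1 h2, h3, h4]
    simp
    ring
  have hdvd : ∀ j, (j ≤ ℓ → H ∣ R j) ∧ (j + 1 ≤ ℓ → H ∣ R (j + 1)) := by
    intro j
    induction j with
    | zero =>
      exact ⟨fun _ => by rw [hR0, Polynomial.map_mul]; exact dvd_mul_right _ _,
        fun _ => by rw [zero_add, hR1, Polynomial.map_mul]; exact dvd_mul_right _ _⟩
    | succ j ih =>
      refine ⟨ih.2, fun h => ?_⟩
      have h1 := hrec (j + 1) (by omega) (by omega)
      have hb := hβne (j + 1) (by omega) (by omega)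
      rw [Nat.add_sub_cancel, smul_eq_C_mul, smul_eq_C_mul] at h1
      have h2 : C (β (j + 1)) * R (j + 1 + 1) = C (α (j + 1)) * R j - Q (j + 1) * R (j + 1) := by
        rw [h1]; ring
      have h3 : H ∣ C (β (j + 1)) * R (j + 1 + 1) := by
        rw [h2]
        exact dvd_sub (Dvd.dvd.mul_left (ih.1 (by omega)) _) (Dvd.dvd.mul_left (ih.2 (by omega)) _)
      have hu : IsUnit (C (β (j + 1))) := isUnit_C.mpr hb.isUnit
      exact hu.dvd_mul_left.mp h3
  have hex : ∀ j, ∃ S : (FractionRing D)[X], j ≤ ℓ → R j = C (γ ^ (2 * (j - 1))) * (H * S) := by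
    intro j
    by_cases hj : j ≤ ℓ
    · obtain ⟨F, hF⟩ := (hdvd j).1 hj
      refine ⟨C ((γ ^ (2 * (j - 1)))⁻¹) * F, fun _ => ?_⟩
      have : C (γ ^ (2 * (j - 1))) * C ((γ ^ (2 * (j - 1)))⁻¹) = 1 := by
        rw [← C_mul, mul_inv_cancel₀ (pow_ne_zero _ hγ0), C_1]
      rw [hF]
      linear_combination (-H * F) * this
    · exact ⟨0, fun h => absurd h hj⟩
  choose S hS using hex
  have hS0 : S 0 = a.map φ := by
    have := hS 0 (by omega)
    rw [hR0, Polynomial.map_mul] at this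
    simp only [Nat.sub_self, Nat.zero_sub, mul_zero, pow_zero, C_1, one_mul] at this
    exact (mul_left_cancel₀ hH0 this).symm
  have hS1 : S 1 = b.map φ := by
    have := hS 1 (by omega)
    rw [hR1, Polynomial.map_mul] at this
    simp only [Nat.sub_self, Nat.zero_sub, mul_zero, pow_zero, C_1, one_mul] at this
    exact (mul_left_cancel₀ hH0 this).symm
  have hSne : ∀ j ≤ ℓ, S j ≠ 0 := by
    intro j hj h0
    apply hRne j hj
    rw [hS j hj, h0]; simp
  have hlc : ∀ j ≤ ℓ, (R j).leadingCoeff = γ ^ (2 * (j - 1)) * (γ * (S j).leadingCoeff) := by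
    intro j hj
    rw [hS j hj]
    simp only [leadingCoeff_mul, leadingCoeff_C, hHlc]
  have hdS : ∀ j ≤ ℓ, d j = H.natDegree + (S j).natDegree := by
    intro j hj
    rw [hd, hS j hj, natDegree_C_mul (pow_ne_zero _ hγ0), natDegree_mul hH0 (hSne j hj)]
  have hdd : ∀ k, k ≤ i → d (i - k) = d i + k := by
    intro k
    induction k with
    | zero => simp
    | succ k ih =>
      intro hk
      have h1 := hnormal (i - k) (by omega) (by omega)
      rw [show i - (k + 1) = i - k - 1 by omega, h1, ih (by omega)]
      ring
  let t : ℕ → FractionRing D := fun j => if j = 1 then 1 else (S (j - 1)).leadingCoeff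
  have hchain := fun J => Dt_chain (S i).natDegree J i S t
    (by
      intro j hj
      simp only [t]
      rw [if_neg (by omega), Nat.add_sub_cancel])
    (by
      intro j hj
      have h1 := hdd (i - j) (by omega)
      rw [show i - (i - j) = j by omega, hdS j (by omega), hdS i hiℓ] at h1
      omega)
    (fun j hj => hSne j (by omega))
    (by
      intro j hj1 hji
      have h := hrec j hj1 (by omega)
      rw [smul_eq_C_mul, smul_eq_C_mul, hα' j hj1 (by omega)] at h
      obtain ⟨n, rfl⟩ : ∃ n, j = n + 1 := ⟨j - 1, by omega⟩
      rcases n with _ | n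
      · refine ⟨C (γ ^ 2)⁻¹ * Q 1, ?_⟩
        have hc : C (γ ^ 2) * C (γ ^ 2)⁻¹ = (1 : (FractionRing D)[X]) := by
          rw [← C_mul, mul_inv_cancel₀ (pow_ne_zero _ hγ0), C_1]
        have h00 := hS 0 (by omega)
        have h11 := hS 1 (by omega)
        have h22 := hS 2 (by omega)
        have hl := hlc 1 (by omega)
        simp only [zero_add, Nat.sub_self, one_add_one_eq_two] at h ⊢
        rw [hβ1', hl, h00, h11, h22] at h
        simp only [t, if_true]
        apply mul_left_cancel₀ hH0
        apply mul_left_cancel₀ (C_ne_zero.mpr (pow_ne_zero 2 hγ0))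
        simp only [map_mul, map_pow, map_one] at h hc ⊢
        norm_num at h
        simp only [one_pow, one_mul]
        linear_combination h - Q 1 * S 1 * H * hc
      · set m : ℕ := n + 1 with hm
        refine ⟨C (γ ^ (4 * m))⁻¹ * Q (m + 1), ?_⟩
        have hc : C (γ ^ (4 * m)) * C (γ ^ (4 * m))⁻¹ = (1 : (FractionRing D)[X]) := by
          rw [← C_mul, mul_inv_cancel₀ (pow_ne_zero _ hγ0), C_1]
        have h0 := hS m (by omega)
        have h1 := hS (m + 1) (by omega)
        have h2 := hS (m + 1 + 1) (by omega)
        have hl := hlc m (by omega)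
        have hl1 := hlc (m + 1) (by omega)
        rw [hβ' (m + 1) (by omega) (by omega), Nat.add_sub_cancel] at h
        rw [hl1, hl, h0, h1, h2] at h
        have ht : t (m + 1) = (S m).leadingCoeff := by
          simp only [t]; rw [if_neg (by omega), Nat.add_sub_cancel]
        rw [ht, Nat.add_sub_cancel]
        apply mul_left_cancel₀ hH0
        apply mul_left_cancel₀ (C_ne_zero.mpr (pow_ne_zero (6 * m) hγ0))
        have e1 : m - 1 = n := by omega
        have e2 : m + 1 - 1 = n + 1 := by omega
        have e3 : m + 1 + 1 - 1 = n + 2 := by omega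
        rw [e1, e2, e3] at h
        simp only [map_mul, map_pow] at h hc ⊢
        generalize C γ⁻¹ = w at *
        generalize (S (m + 1)).leadingCoeff = s1 at *
        generalize (S m).leadingCoeff = s0 at *
        generalize Q (m + 1) = q at *
        generalize S (m + 1 + 1) = S2 at *
        generalize S (m + 1) = S1 at *
        generalize S m = S0 at *
        rw [hm] at hc ⊢
        linear_combination h - q * S1 * H * (C γ) ^ (2 * (n + 1)) * hc)
    (i - 1) 1 le_rfl (by omega)
  have hint : ∀ J, ∃ x : D, φ x = (S i).coeff J := by
    intro J
    obtain ⟨ε, hε, h⟩ := hchain J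
    rw [Nat.sub_self, hS0, hS1, Dt_map] at h
    simp only [t, if_true, one_pow, one_mul] at h
    rcases hε with rfl | rfl
    · exact ⟨_, by rw [h, one_mul]⟩
    · exact ⟨-_, by rw [h, map_neg, neg_one_mul]⟩
  obtain ⟨S', hS'⟩ : ∃ S' : D[X], S'.map φ = S i := by
    have : S i ∈ Polynomial.lifts φ := by
      rw [Polynomial.lifts_iff_coeff_lifts]
      exact hint
    exact (Polynomial.mem_lifts _).mp this
  rw [dvd_content_iff_C_dvd]
  refine ⟨G * S', Polynomial.map_injective φ hinj ?_⟩
  rw [hR' i (by omega), hS i hiℓ, Polynomial.map_mul, Polynomial.map_mul, hS', map_C, map_pow φ]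
end

section
/- Let (R_0, R_1, ..., R_ℓ, R_{ℓ+1}=0) be the subresultant PRS of A and B (not necessarily normal). Then for every i with 2 ≤ i ≤ ℓ, the element gcd(lc(A), lc(B)) of D divides the content cont(R_i). -/
open Polynomial

/-- entry -/
noncomputable def srEnt {K : Type*} [CommRing K] (j : ℕ) (f : K[X]) (c : ℕ) : K[X] :=
  if c = 0 then f else C (f.coeff (j + c))

/-- column numbering -/
def srCol (p q : ℕ) : Fin p ⊕ Fin q → ℕ := Sum.elim (fun k => (k : ℕ)) (fun k => p + (k : ℕ))

/-- row polynomials -/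
noncomputable def srRow {K : Type*} [CommRing K] (P Q : K[X]) (p q : ℕ) :
    Fin p ⊕ Fin q → K[X] :=
  Sum.elim (fun k => X ^ (k : ℕ) * P) (fun k => X ^ (k : ℕ) * Q)

/-- subresultant matrix -/
noncomputable def srMat {K : Type*} [CommRing K] (j : ℕ) (P Q : K[X]) (p q : ℕ) :
    Matrix (Fin p ⊕ Fin q) (Fin p ⊕ Fin q) K[X] :=
  Matrix.of fun a b => srEnt j (srRow P Q p q a) (srCol p q b)

lemma srEnt_add {K : Type*} [CommRing K] (j : ℕ) (f g : K[X]) (c : ℕ) :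
    srEnt j (f + g) c = srEnt j f c + srEnt j g c := by
  unfold srEnt; split_ifs <;> simp

lemma srEnt_C_mul {K : Type*} [CommRing K] (j : ℕ) (a : K) (f : K[X]) (c : ℕ) :
    srEnt j (C a * f) c = C a * srEnt j f c := by
  unfold srEnt; split_ifs <;> simp

lemma srEnt_sum {K : Type*} [CommRing K] {ι : Type*} (s : Finset ι) (j : ℕ) (f : ι → K[X]) (c : ℕ) :
    srEnt j (∑ i ∈ s, f i) c = ∑ i ∈ s, srEnt j (f i) c := by
  unfold srEnt; split_ifs <;> simp

lemma sq_det_submatrix {R m n : Type*} [CommRing R] [Fintype m] [DecidableEq m] [Fintype n]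
    [DecidableEq n] (M : Matrix m m R) (e e' : n ≃ m) :
    (M.submatrix e e').det ^ 2 = M.det ^ 2 := by
  have : M.submatrix e e' = ((M.submatrix (e'.symm.trans e) id).submatrix e' e') := by
    ext; simp
  rw [this, Matrix.det_submatrix_equiv_self, Matrix.det_permute, mul_pow]
  have h : ((Equiv.Perm.sign (e'.symm.trans e) : ℤ) : R) ^ 2 = 1 := by
    rcases Int.units_eq_one_or (Equiv.Perm.sign (e'.symm.trans e)) with h | h <;> simp [h]
  rw [h, one_mul]

lemma srMat_swap {K : Type*} [CommRing K] (j : ℕ) (P Q : K[X]) (p q : ℕ) :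
    (srMat j P Q p q).det ^ 2 = (srMat j Q P q p).det ^ 2 := by
  let e' : Fin p ⊕ Fin q ≃ Fin q ⊕ Fin p :=
    finSumFinEquiv.trans ((finCongr (add_comm p q)).trans finSumFinEquiv.symm)
  have he' : ∀ b, srCol q p (e' b) = srCol p q b := by
    intro b
    have h1 : ∀ p q (b : Fin p ⊕ Fin q), srCol p q b = (finSumFinEquiv b : Fin (p+q)) := by
      intro p q b; cases b <;> simp [srCol]
    rw [h1, h1]; simp [e']
  rw [← sq_det_submatrix (srMat j Q P q p) (Equiv.sumComm _ _) e']
  congr 2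
  ext1 a b
  simp only [srMat, Matrix.submatrix_apply, Matrix.of_apply, he']
  cases a <;> simp [srRow]

lemma srMat_red {K : Type*} [CommRing K] (j : ℕ) (P Q R q : K[X]) (α β : K) (p t : ℕ)
    (hq : q.natDegree + p ≤ t) (h : α • P = q * Q + β • R) :
    C α ^ p * (srMat j P Q p t).det = C β ^ p * (srMat j R Q p t).det := by
  let U : Matrix (Fin p) (Fin t) K[X] := Matrix.of fun k l =>
    if (k : ℕ) ≤ l then C (q.coeff (l - k)) else 0
  have key : ∀ k : Fin p, ∀ c, C α * srEnt j (X ^ (k : ℕ) * P) c =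
      (∑ l : Fin t, U k l * srEnt j (X ^ (l : ℕ) * Q) c) + C β * srEnt j (X ^ (k : ℕ) * R) c := by
    intro k c
    rw [← srEnt_C_mul, ← srEnt_C_mul]
    have e1 : C α * (X ^ (k : ℕ) * P) = (X ^ (k : ℕ) * q) * Q + C β * (X ^ (k : ℕ) * R) := by
      simp only [smul_eq_C_mul] at h
      linear_combination X ^ (k : ℕ) * h
    have e2 : X ^ (k : ℕ) * q = ∑ l : Fin t, U k l * X ^ (l : ℕ) := by
      rw [as_sum_range_C_mul_X_pow' (X ^ (k : ℕ) * q) (n := t), Finset.sum_range]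
      · refine Finset.sum_congr rfl fun l _ => ?_
        simp only [U, Matrix.of_apply, coeff_X_pow_mul']
        split_ifs <;> simp
      · have := natDegree_mul_le (p := (X ^ (k : ℕ) : K[X])) (q := q)
        have := natDegree_X_pow_le (R := K) (k : ℕ)
        have := k.2
        omega
    rw [e1, srEnt_add, e2, Finset.sum_mul, srEnt_sum]
    congr 1
    refine Finset.sum_congr rfl fun l _ => ?_
    simp only [U, Matrix.of_apply]
    split_ifs
    · rw [mul_assoc, srEnt_C_mul]
    · simp [srEnt]
  have hM : Matrix.fromBlocks (Matrix.diagonal fun _ => C α) (-U) 0 1 * srMat j P Q p t =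
      Matrix.fromBlocks (Matrix.diagonal fun _ => C β) 0 0 1 * srMat j R Q p t := by
    ext1 a b
    rw [Matrix.mul_apply, Matrix.mul_apply, Fintype.sum_sum_type, Fintype.sum_sum_type]
    rcases a with a | a
    · have := key a (srCol p t b)
      simp [srMat, srRow, Matrix.diagonal_apply, this]
    · simp [srMat, srRow, Matrix.one_apply]
  have := congrArg Matrix.det hM
  rw [Matrix.det_mul, Matrix.det_mul, Matrix.det_fromBlocks_zero₂₁, Matrix.det_fromBlocks_zero₂₁] at this
  simpa using this

lemma srMat_drop {K : Type*} [CommRing K] (j : ℕ) (R Q : K[X]) (p q s : ℕ) (hp : 1 ≤ p)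
    (hQ : Q.natDegree = j + p) (hR : R.natDegree ≤ j + q) :
    (srMat j R Q p (q + s)).det ^ 2 = (srMat j R Q p q).det ^ 2 * C Q.leadingCoeff ^ (2 * s) := by
  let e : (Fin p ⊕ Fin q) ⊕ Fin s ≃ Fin p ⊕ Fin (q + s) :=
    (Equiv.sumAssoc _ _ _).trans (Equiv.sumCongr (Equiv.refl _) finSumFinEquiv)
  let L : Matrix (Fin s) (Fin s) K[X] := Matrix.of fun k l =>
    C ((X ^ (q + k : ℕ) * Q).coeff (j + (p + (q + l))))
  have hL : L.det = C Q.leadingCoeff ^ s := by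
    rw [Matrix.det_of_isLowerTriangular]
    · have : ∀ k, L k k = C Q.leadingCoeff := by
        intro k
        simp only [L, Matrix.of_apply, coeff_X_pow_mul', leadingCoeff, hQ]
        rw [if_pos (by omega)]
        congr 2; omega
      simp [this]
    · intro k l hkl
      have hkl : k < l := hkl
      simp only [L, Matrix.of_apply, coeff_X_pow_mul']
      rw [if_pos (by omega), coeff_eq_zero_of_natDegree_lt, map_zero]
      have : (k : ℕ) < l := hkl
      omega
  have hM : (srMat j R Q p (q + s)).submatrix e e =
      Matrix.fromBlocks (srMat j R Q p q) 0
        (Matrix.of fun (k : Fin s) b => srEnt j (X ^ (q + k : ℕ) * Q) (srCol p q b)) L := by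
    ext1 a b
    rcases a with (a | a) | a <;> rcases b with (b | b) | b <;>
      simp only [srMat, srRow, srCol, e, Matrix.submatrix_apply, Matrix.of_apply, L, Equiv.trans_apply,
        Equiv.sumAssoc_apply_inl_inl, Equiv.sumAssoc_apply_inl_inr, Equiv.sumAssoc_apply_inr,
        Equiv.sumCongr_apply, Sum.map_inl, Sum.map_inr, Sum.elim_inl, Sum.elim_inr,
        finSumFinEquiv_apply_left, finSumFinEquiv_apply_right, Fin.val_castAdd, Fin.val_natAdd,
        Equiv.refl_apply, Matrix.fromBlocks_apply₁₁, Matrix.fromBlocks_apply₁₂,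
        Matrix.fromBlocks_apply₂₁, Matrix.fromBlocks_apply₂₂, Matrix.zero_apply]
    · rw [srEnt, if_neg (by omega), coeff_X_pow_mul', if_pos (by omega),
        coeff_eq_zero_of_natDegree_lt (by omega), map_zero]
    · rw [srEnt, if_neg (by omega), coeff_X_pow_mul', if_pos (by omega),
        coeff_eq_zero_of_natDegree_lt (by omega), map_zero]
    · rw [srEnt, if_neg (by omega)]
  rw [← Matrix.det_submatrix_equiv_self e, hM, Matrix.det_fromBlocks_zero₁₂, hL, mul_pow, ← pow_mul,
    mul_comm s 2]

/-- subresultant -/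
noncomputable def sr {K : Type*} [CommRing K] (j : ℕ) (P Q : K[X]) : K[X] :=
  (srMat j P Q (Q.natDegree - j) (P.natDegree - j)).det

lemma quot_deg {K : Type*} [Field K] (P Q R q : K[X]) (α β : K)
    (hQ : Q ≠ 0) (hQP : Q.natDegree ≤ P.natDegree) (hR : R.degree < Q.degree)
    (h : α • P = q * Q + β • R) : q.natDegree + Q.natDegree ≤ P.natDegree := by
  by_cases hq : q = 0
  · simp [hq, hQP]
  have h2 : q * Q = α • P - β • R := by rw [h]; ring
  rw [← natDegree_mul hq hQ, h2]
  refine (natDegree_sub_le _ _).trans (max_le (natDegree_smul_le _ _) ((natDegree_smul_le _ _).trans ?_))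
  exact (natDegree_le_natDegree hR.le).trans hQP

lemma sr_step {K : Type*} [Field K] (j : ℕ) (P Q R q : K[X]) (α β : K)
    (hQ : Q ≠ 0) (hQP : Q.natDegree ≤ P.natDegree) (hR : R.degree < Q.degree)
    (h : α • P = q * Q + β • R) (hj : j < R.natDegree) :
    C α ^ (2 * (Q.natDegree - j)) * sr j P Q ^ 2 = C β ^ (2 * (Q.natDegree - j)) *
      C Q.leadingCoeff ^ (2 * (P.natDegree - R.natDegree)) * sr j Q R ^ 2 := by
  have hd := quot_deg P Q R q α β hQ hQP hR h
  have hRQ := natDegree_le_natDegree hR.le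
  have h1 := srMat_red j P Q R q α β (Q.natDegree - j) (P.natDegree - j) (by omega) h
  have h2 := srMat_drop j R Q (Q.natDegree - j) (R.natDegree - j) (P.natDegree - R.natDegree)
    (by omega) (by omega) (by omega)
  rw [srMat_swap j R Q _ (R.natDegree - j),
    show R.natDegree - j + (P.natDegree - R.natDegree) = P.natDegree - j by omega] at h2
  rw [mul_comm 2 (Q.natDegree - j), pow_mul, pow_mul, ← mul_pow, sr, h1, mul_pow, h2, sr]
  ring

lemma sr_last {K : Type*} [Field K] (j : ℕ) (P Q R q : K[X]) (α β : K)
    (hQ : Q ≠ 0) (hQP : Q.natDegree ≤ P.natDegree) (hR : R.degree < Q.degree)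
    (h : α • P = q * Q + β • R) (hj : Q.natDegree = j + 1) :
    C α ^ 2 * sr j P Q ^ 2 = C β ^ 2 *
      C Q.leadingCoeff ^ (2 * (P.natDegree - Q.natDegree + 1)) * R ^ 2 := by
  have hd := quot_deg P Q R q α β hQ hQP hR h
  have hRQ : R.natDegree < Q.natDegree := by
    rcases eq_or_ne R 0 with rfl | h0
    · simp; omega
    · exact natDegree_lt_natDegree h0 hR
  have h1 := srMat_red j P Q R q α β 1 (P.natDegree - j) (by omega) h
  have h2 := srMat_drop j R Q 1 0 (P.natDegree - Q.natDegree + 1)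
    (by omega) (by omega) (by omega)
  have h3 : (srMat j R Q 1 0).det = R := by
    have : Unique (Fin 1 ⊕ Fin 0) := Equiv.unique (Equiv.sumEmpty (Fin 1) (Fin 0))
    rw [Matrix.det_unique]
    have hh : (default : Fin 1 ⊕ Fin 0) = Sum.inl 0 := Subsingleton.elim _ _
    simp [hh, srMat, srRow, srCol, srEnt]
  rw [h3, show 0 + (P.natDegree - Q.natDegree + 1) = P.natDegree - j by omega] at h2
  rw [sr, show Q.natDegree - j = 1 by omega]
  rw [pow_one, pow_one] at h1
  rw [← mul_pow, h1, mul_pow, h2]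
  ring

lemma sr_dvd {K : Type*} [CommRing K] (j : ℕ) (A B : K[X]) (g : K) (hA : g ∣ A.leadingCoeff)
    (hB : g ∣ B.leadingCoeff) (hj : j < B.natDegree) (hBA : B.natDegree ≤ A.natDegree) :
    C g ∣ sr j A B := by
  rw [sr, Matrix.det_apply]
  refine Finset.dvd_sum fun σ _ => ?_
  rw [Units.smul_def, zsmul_eq_mul]
  refine Dvd.dvd.mul_left ?_ _
  let c : Fin (B.natDegree - j) ⊕ Fin (A.natDegree - j) :=
    Sum.inr ⟨A.natDegree - j - 1, by omega⟩
  refine dvd_trans ?_ (Finset.dvd_prod_of_mem _ (Finset.mem_univ c))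
  generalize σ c = r
  have aux : ∀ (P : K[X]) (k m : ℕ), g ∣ P.leadingCoeff → P.natDegree + k ≤ m →
      C g ∣ C ((X ^ k * P).coeff m) := by
    intro P k m hP hm
    refine map_dvd C ?_
    rw [coeff_X_pow_mul', if_pos (by omega)]
    rcases hm.eq_or_lt with h | h
    · rw [← h, Nat.add_sub_cancel]; exact hP
    · rw [coeff_eq_zero_of_natDegree_lt (by omega)]; exact dvd_zero _
  rcases r with r | r <;>
    simp only [srMat, srRow, srCol, c, Matrix.of_apply, Sum.elim_inl, Sum.elim_inr] <;>
    rw [srEnt, if_neg (by omega)]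
  · exact aux _ _ _ hA (by omega)
  · exact aux _ _ _ hB (by omega)

lemma sr_map {K L : Type*} [CommRing K] [CommRing L] (f : K →+* L) (hf : Function.Injective f)
    (j : ℕ) (A B : K[X]) : (sr j A B).map f = sr j (A.map f) (B.map f) := by
  rw [sr, sr, natDegree_map_eq_of_injective hf, natDegree_map_eq_of_injective hf,
    ← coe_mapRingHom, RingHom.map_det]
  congr 1
  ext1 a b
  simp only [RingHom.mapMatrix_apply, Matrix.map_apply, srMat, Matrix.of_apply, srEnt]
  rcases a with a | a <;> simp only [srRow, Sum.elim_inl, Sum.elim_inr] <;> split_ifs <;> simp [coeff_X_pow_mul']  <;> split_ifs <;> simp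

lemma scal_step {K : Type*} [Field K] (a b x y : K) (p r δ : ℕ) (hp : 1 ≤ p) (hδ : 1 ≤ δ)
    (h : y * x ^ (δ - 1) = b ^ δ) (hr : r ≤ p) :
    a ^ p * x ^ (δ + p - 1) * (b ^ (δ + 1)) ^ p =
      (a * x ^ δ) ^ p * b ^ (δ + p - r) * (b ^ r * y ^ (p - 1)) := by
  obtain ⟨p, rfl⟩ := Nat.exists_eq_add_of_le' hp
  obtain ⟨δ, rfl⟩ := Nat.exists_eq_add_of_le' hδ
  simp only [Nat.add_sub_cancel] at *
  have h1 : b ^ (δ + 1 + (p + 1) - r) * b ^ r = b ^ (δ + 1 + (p + 1)) := by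
    rw [← pow_add]; congr 1; omega
  have h2 : (b ^ (δ + 1)) ^ p = y ^ p * (x ^ δ) ^ p := by rw [← h, mul_pow]
  calc _ = a ^ (p + 1) * x ^ (δ + p + 1) * b ^ (δ + 1 + (p + 1)) * (b ^ (δ + 1)) ^ p := by
        rw [show δ + 1 + (p + 1) - 1 = δ + p + 1 by omega]; ring
    _ = _ := by rw [h2, ← h1]; ring


/-- Let `D` be a UFD with a normalized gcd and fraction field `K`, and let
`A, B ∈ D[x]` be nonzero with `deg A ≥ deg B ≥ 1`.  Let
`(R 0, R 1, …, R ℓ, R (ℓ+1) = 0)` be the subresultant PRS of `A` and `B` (not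
necessarily normal; with quotients `Q i`, multipliers `α i`, `β i` given by the
subresultant formulas via the auxiliary sequence `ψ i`, degrees `d i = deg (R i)`, and
all terms lying in `D[x]` as witnessed by `R' i`).  Then for every `i` with
`2 ≤ i ≤ ℓ`, the element `gcd (lc A) (lc B)` of `D` divides `cont (R i)`. -/
theorem stmt_1 {D : Type*} [CommRing D] [IsDomain D] [NormalizedGCDMonoid D]
    [UniqueFactorizationMonoid D]
    (A B : Polynomial D) (hA : A ≠ 0) (hB : B ≠ 0)
    (hdeg : B.natDegree ≤ A.natDegree) (hB1 : 1 ≤ B.natDegree)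
    -- the subresultant PRS `R 0 = A, R 1 = B, …, R ℓ ≠ 0, R (ℓ+1) = 0` of `A` and `B`
    -- over the fraction field `K` of `D`, with quotients `Q i`, scalars `α i, β i`,
    -- degrees `d i`, the auxiliary sequence `ψ i`, and terms `R' i` in `D[x]`
    (ℓ : ℕ) (R Q : ℕ → Polynomial (FractionRing D))
    (α β ψ : ℕ → FractionRing D)
    (R' : ℕ → Polynomial D) (d : ℕ → ℕ)
    (hR0 : R 0 = A.map (algebraMap D (FractionRing D)))
    (hR1 : R 1 = B.map (algebraMap D (FractionRing D)))
    (hRne : ∀ i, i ≤ ℓ → R i ≠ 0)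
    (hRlast : R (ℓ + 1) = 0)
    (hd : ∀ i, d i = (R i).natDegree)
    (hαne : ∀ i, 1 ≤ i → i ≤ ℓ → α i ≠ 0)
    (hβne : ∀ i, 1 ≤ i → i ≤ ℓ → β i ≠ 0)
    (hdesc : ∀ i, 1 ≤ i → i ≤ ℓ → (R (i + 1)).degree < (R i).degree)
    (hrec : ∀ i, 1 ≤ i → i ≤ ℓ → α i • R (i - 1) = Q i * R i + β i • R (i + 1))
    (hα : ∀ i, 1 ≤ i → i ≤ ℓ → α i = (R i).leadingCoeff ^ (d (i - 1) - d i + 1))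
    (hψ1 : ψ 1 = -1)
    (hψ : ∀ i, 2 ≤ i → i ≤ ℓ →
      ψ i = (-(R (i - 1)).leadingCoeff) ^ (d (i - 2) - d (i - 1)) /
        ψ (i - 1) ^ (d (i - 2) - d (i - 1) - 1))
    (hβ1 : β 1 = (-1) ^ (d 0 - d 1 + 1))
    (hβ : ∀ i, 2 ≤ i → i ≤ ℓ →
      β i = -(R (i - 1)).leadingCoeff * ψ i ^ (d (i - 1) - d i))
    (hR' : ∀ i, i ≤ ℓ + 1 → (R' i).map (algebraMap D (FractionRing D)) = R i)
    :
    ∀ i, 2 ≤ i → i ≤ ℓ →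
      gcd A.leadingCoeff B.leadingCoeff ∣ (R' i).content := by
  have hinj : Function.Injective (algebraMap D (FractionRing D)) := IsFractionRing.injective _ _
  have hd0 : d 1 ≤ d 0 := by
    rw [hd, hd, hR0, hR1, natDegree_map_eq_of_injective hinj, natDegree_map_eq_of_injective hinj]
    exact hdeg
  have hdlt : ∀ i, 1 ≤ i → i + 1 ≤ ℓ → d (i + 1) < d i := by
    intro i h1 h2
    rw [hd, hd]
    exact natDegree_lt_natDegree (hRne _ h2) (hdesc i h1 (by omega))
  have hdle : ∀ i, i + 1 ≤ ℓ → d (i + 1) ≤ d i := by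
    intro i h2
    rcases Nat.eq_zero_or_pos i with rfl | h
    · exact hd0
    · exact (hdlt i h h2).le
  have hlc : ∀ i, i ≤ ℓ → (R i).leadingCoeff ≠ 0 := fun i h => leadingCoeff_ne_zero.2 (hRne i h)
  have hψne : ∀ i, 1 ≤ i → i ≤ ℓ → ψ i ≠ 0 := by
    intro i h1
    induction i, h1 using Nat.le_induction with
    | base => intro _; rw [hψ1]; simp
    | succ i h1 ih =>
      intro h2
      rw [hψ _ (by omega) h2]
      exact div_ne_zero (pow_ne_zero _ (neg_ne_zero.2 (hlc _ (by simp; omega))))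
        (pow_ne_zero _ (ih (by omega)))
  -- one reduction step
  have step : ∀ i j, i + 2 ≤ ℓ → j < d (i + 2) →
      C ((α (i + 1) ^ 2) ^ (d (i + 1) - j)) * sr j (R i) (R (i + 1)) ^ 2 =
      C ((β (i + 1) ^ 2) ^ (d (i + 1) - j) *
        ((R (i + 1)).leadingCoeff ^ 2) ^ (d i - d (i + 2))) * sr j (R (i + 1)) (R (i + 2)) ^ 2 := by
    intro i j h2 hj
    have hle := hdle i (by omega)
    have := sr_step j (R i) (R (i + 1)) (R (i + 2)) (Q (i + 1)) (α (i + 1)) (β (i + 1))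
      (hRne _ (by omega)) (by rw [← hd, ← hd]; exact hle) (hdesc (i + 1) (by omega) (by omega))
      (hrec (i + 1) (by omega) (by omega)) (by rw [← hd]; exact hj)
    simp only [← hd] at this
    simp only [C_mul, C_pow, ← pow_mul]
    exact this
  have H : ∀ i, i + 2 ≤ ℓ → ∀ j, j < d (i + 2) →
      sr j (R 0) (R 1) ^ 2 * C (((R (i + 1)).leadingCoeff ^ 2) ^ (d (i + 2) - j) *
        (ψ (i + 2) ^ 2) ^ (d (i + 1) - j - 1)) = sr j (R (i + 1)) (R (i + 2)) ^ 2 := by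
    intro i
    induction i with
    | zero =>
      intro h2 j hj
      have hs := step 0 j h2 hj
      have hlt : d 2 < d 1 := hdlt 1 le_rfl h2
      change j < d 2 at hj
      have hα1 := hα 1 le_rfl (by omega)
      have hψ2 := hψ 2 le_rfl h2
      simp only [Nat.zero_add, Nat.sub_self, Nat.add_one_sub_one] at hs hα1 hψ2 ⊢
      norm_num at hs hα1 hψ2 ⊢
      have hb : β 1 ^ 2 = 1 := by rw [hβ1, ← pow_mul, mul_comm, pow_mul]; simp
      have hp2 : ψ 2 ^ 2 = ((R 1).leadingCoeff ^ 2) ^ (d 0 - d 1) := by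
        rw [hψ2, hψ1, div_pow, ← pow_mul, ← pow_mul, mul_comm _ 2, mul_comm _ 2, pow_mul, pow_mul]
        simp
      have ha2 : α 1 ^ 2 = ((R 1).leadingCoeff ^ 2) ^ (d 0 - d 1 + 1) := by
        rw [hα1]; ring
      have hsc : (α 1 ^ 2) ^ (d 1 - j) = ((R 1).leadingCoeff ^ 2) ^ (d 0 - d 2) *
          (((R 1).leadingCoeff ^ 2) ^ (d 2 - j) * (ψ 2 ^ 2) ^ (d 1 - j - 1)) := by
        rw [ha2, hp2]
        generalize (R 1).leadingCoeff ^ 2 = b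
        rw [← mul_assoc, ← pow_add, ← pow_mul, ← pow_mul, ← pow_add,
          show d 0 - d 2 + (d 2 - j) = d 0 - d 1 + (d 1 - j) by omega]
        obtain ⟨p, hp⟩ : ∃ p, d 1 - j = p + 1 := ⟨d 1 - j - 1, by omega⟩
        rw [hp, Nat.add_sub_cancel]
        congr 1
        ring
      have hne : (C (((R 1).leadingCoeff ^ 2) ^ (d 0 - d 2)) : (FractionRing D)[X]) ≠ 0 := by
        rw [Ne, C_eq_zero]
        exact pow_ne_zero _ (pow_ne_zero _ (hlc _ (by omega)))
      apply mul_left_cancel₀ hne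
      simp only [← C_pow, ← C_mul] at hs ⊢
      rw [hb, one_pow, one_mul] at hs
      rw [← hs, mul_left_comm, ← C_mul, ← hsc, mul_comm]
    | succ i ih =>
      intro h2 j hj
      have hlt : d (i + 3) < d (i + 2) := hdlt (i + 2) (by omega) h2
      change j < d (i + 3) at hj
      have hlt1 : d (i + 2) < d (i + 1) := hdlt (i + 1) (by omega) (by omega)
      have hi := ih (by omega) j (by omega)
      have hs := step (i + 1) j h2 hj
      have hαi := hα (i + 2) (by omega) (by omega)
      have hβi := hβ (i + 2) (by omega) (by omega)
      have hψi := hψ (i + 3) (by omega) (by omega)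
      have hψn := hψne (i + 2) (by omega) (by omega)
      simp only [show i + 2 - 1 = i + 1 by omega, show i + 3 - 1 = i + 2 by omega,
        show i + 3 - 2 = i + 1 by omega, show i + 1 + 1 = i + 2 by omega,
        show i + 1 + 2 = i + 3 by omega] at *
      rw [eq_div_iff (pow_ne_zero _ hψn)] at hψi
      have hψ2 : ψ (i + 3) ^ 2 * (ψ (i + 2) ^ 2) ^ (d (i + 1) - d (i + 2) - 1) =
          ((R (i + 2)).leadingCoeff ^ 2) ^ (d (i + 1) - d (i + 2)) := by
        rw [pow_right_comm, ← mul_pow, hψi, pow_right_comm, neg_sq]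
      have hsc := scal_step ((R (i + 1)).leadingCoeff ^ 2) ((R (i + 2)).leadingCoeff ^ 2)
        (ψ (i + 2) ^ 2) (ψ (i + 3) ^ 2) (d (i + 2) - j)
        (d (i + 3) - j) (d (i + 1) - d (i + 2)) (by omega) (by omega) hψ2 (by omega)
      rw [show d (i + 1) - d (i + 2) + (d (i + 2) - j) - 1 = d (i + 1) - j - 1 by omega,
        show d (i + 1) - d (i + 2) + (d (i + 2) - j) - (d (i + 3) - j) = d (i + 1) - d (i + 3) by
          omega] at hsc
      have ha2 : α (i + 2) ^ 2 =
          ((R (i + 2)).leadingCoeff ^ 2) ^ (d (i + 1) - d (i + 2) + 1) := by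
        rw [hαi, pow_right_comm]
      have hb2 : β (i + 2) ^ 2 = (R (i + 1)).leadingCoeff ^ 2 *
          (ψ (i + 2) ^ 2) ^ (d (i + 1) - d (i + 2)) := by
        rw [hβi, mul_pow, neg_sq, pow_right_comm]
      rw [← ha2, ← hb2] at hsc
      have hne : (C ((β (i + 2) ^ 2) ^ (d (i + 2) - j) *
        ((R (i + 2)).leadingCoeff ^ 2) ^ (d (i + 1) - d (i + 3))) : (FractionRing D)[X]) ≠ 0 := by
        rw [Ne, C_eq_zero]
        exact mul_ne_zero (pow_ne_zero _ (pow_ne_zero _ (hβne _ (by omega) (by omega))))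
          (pow_ne_zero _ (pow_ne_zero _ (hlc _ (by omega))))
      apply mul_left_cancel₀ hne
      rw [← hs, ← hi, mul_left_comm, ← C_mul, ← hsc, mul_left_comm, ← C_mul, mul_comm ((α _ ^ 2) ^ _)]
  intro t ht2 htl
  obtain ⟨i, rfl⟩ := Nat.exists_eq_add_of_le' ht2
  have hlt := hdlt (i + 1) (by omega) htl
  obtain ⟨j, hj⟩ : ∃ j, d (i + 1) = j + 1 := ⟨d (i + 1) - 1, by omega⟩
  have hlast := sr_last j (R i) (R (i + 1)) (R (i + 2)) (Q (i + 1)) (α (i + 1)) (β (i + 1))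
      (hRne _ (by omega)) (by rw [← hd, ← hd]; exact hdle i (by omega))
      (hdesc (i + 1) (by omega) (by omega))
      (hrec (i + 1) (by omega) (by omega)) (by rw [← hd]; exact hj)
  simp only [← hd] at hlast
  have hαi := hα (i + 1) (by omega) (by omega)
  have hαn := hαne (i + 1) (by omega) (by omega)
  rw [show i + 1 - 1 = i by omega] at hαi
  have ha2 : (C (R (i + 1)).leadingCoeff) ^ (2 * (d i - d (i + 1) + 1)) = C (α (i + 1)) ^ 2 := by
    rw [hαi]; simp only [C_pow]; ring
  rw [ha2, mul_comm (C (β (i + 1)) ^ 2), mul_assoc] at hlast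
  have hl2 := mul_left_cancel₀ (pow_ne_zero 2 (C_ne_zero.2 hαn)) hlast
  have hfin : sr j (R 0) (R 1) ^ 2 = R (i + 2) ^ 2 := by
    rcases i with _ | i
    · have hb : β 1 ^ 2 = 1 := by rw [hβ1, ← pow_mul, mul_comm, pow_mul]; simp
      simp only [Nat.zero_add] at hl2
      rw [hl2, ← C_pow, hb]; simp
    · have hH := H i (by omega) j (by rw [show i + 2 = i + 1 + 1 by omega]; omega)
      have hβi := hβ (i + 2) (by omega) (by omega)
      have hβn := hβne (i + 2) (by omega) (by omega)
      simp only [show i + 2 - 1 = i + 1 by omega, show i + 1 + 1 = i + 2 by omega] at *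
      rw [hl2, show d (i + 2) - j = 1 by omega,
        show d (i + 1) - j - 1 = d (i + 1) - d (i + 2) by omega, pow_one] at hH
      have hb2 : β (i + 2) ^ 2 = (R (i + 1)).leadingCoeff ^ 2 *
          (ψ (i + 2) ^ 2) ^ (d (i + 1) - d (i + 2)) := by
        rw [hβi, mul_pow, neg_sq, pow_right_comm]
      rw [← hb2, mul_comm, C_pow] at hH
      exact mul_left_cancel₀ (pow_ne_zero 2 (C_ne_zero.2 hβn)) hH
  have hjB : j < B.natDegree := by
    have hmono : ∀ k, k + 1 ≤ ℓ → d (k + 1) ≤ d 1 := by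
      intro k
      induction k with
      | zero => intro _; exact le_rfl
      | succ k ih => intro hk; exact (hdle (k + 1) hk).trans (ih (by omega))
    have h1 := hmono i (by omega)
    have h2 : d 1 = B.natDegree := by rw [hd, hR1, natDegree_map_eq_of_injective hinj]
    omega
  have hdv := sr_dvd j A B (gcd A.leadingCoeff B.leadingCoeff) (gcd_dvd_left _ _)
    (gcd_dvd_right _ _) hjB hdeg
  have hD : sr j A B ^ 2 = R' (i + 2) ^ 2 := by
    apply map_injective _ hinj
    rw [Polynomial.map_pow, Polynomial.map_pow, sr_map _ hinj, hR' _ (by omega), ← hR0, ← hR1, hfin]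
  have hdv2 : C (gcd A.leadingCoeff B.leadingCoeff) ∣ R' (i + 2) := by
    rcases sq_eq_sq_iff_eq_or_eq_neg.1 hD with h | h
    · rwa [← h]
    · rw [h] at hdv; exact (dvd_neg).1 hdv
  exact dvd_content_iff_C_dvd.2 hdv2
end

section
/- Let I be an ideal of D[x], let d ∈ ℕ, and let T ∈ I be a nonzero polynomial of degree d whose leading coefficient t = lc(T) has minimal Euclidean norm among the leading coefficients of all nonzero degree-d elements of I. Then for every nonzero L ∈ I with deg L ≤ d, the element t divides lc(L) in D. -/
open Polynomial

/-- Let `D` be a Euclidean domain, `I` an ideal of `D[x]`, `d ∈ ℕ`, and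
`T ∈ I` a nonzero polynomial of degree `d` whose leading coefficient `t = lc T` has
minimal Euclidean norm (minimal with respect to the Euclidean "smaller" relation)
among the leading coefficients of all nonzero degree-`d` elements of `I`.  Then for
every nonzero `L ∈ I` with `deg L ≤ d`, the element `t` divides `lc L` in `D`. -/
theorem stmt_3 {D : Type*} [EuclideanDomain D]
    (I : Ideal (Polynomial D)) (d : ℕ) (T : Polynomial D)
    (hTI : T ∈ I) (hT0 : T ≠ 0) (hTd : T.natDegree = d)
    (hmin : ∀ S ∈ I, S ≠ 0 → S.natDegree = d →
      ¬ EuclideanDomain.r S.leadingCoeff T.leadingCoeff) :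
    ∀ L ∈ I, L ≠ 0 → L.natDegree ≤ d → T.leadingCoeff ∣ L.leadingCoeff := by
  intro L hL hL0 hLd
  have ht : T.leadingCoeff ≠ 0 := leadingCoeff_ne_zero.mpr hT0
  rw [← EuclideanDomain.mod_eq_zero]
  by_contra hr
  set q := L.leadingCoeff / T.leadingCoeff with hq
  set S : Polynomial D := L * X ^ (d - L.natDegree) - C q * T with hS
  have hSI : S ∈ I := I.sub_mem (I.mul_mem_right _ hL) (I.mul_mem_left _ hTI)
  have hc : S.coeff d = L.leadingCoeff % T.leadingCoeff := by
    have h1 : (L * X ^ (d - L.natDegree)).coeff d = L.leadingCoeff := by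
      have := coeff_mul_X_pow L (d - L.natDegree) L.natDegree
      rwa [Nat.add_sub_cancel' hLd] at this
    have h2 : T.coeff d = T.leadingCoeff := by rw [← hTd]; rfl
    rw [hS, coeff_sub, h1, coeff_C_mul, h2, EuclideanDomain.mod_eq_sub_mul_div, hq, mul_comm]
  have hle : S.natDegree ≤ d := by
    refine (natDegree_sub_le _ _).trans (max_le ?_ ?_)
    · refine natDegree_mul_le.trans ?_
      rw [natDegree_X_pow]
      omega
    · exact (natDegree_C_mul_le _ _).trans hTd.le
  have hcd : S.coeff d ≠ 0 := hc ▸ hr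
  have hd : S.natDegree = d := le_antisymm hle (le_natDegree_of_ne_zero hcd)
  have hS0 : S ≠ 0 := by
    intro h
    apply hcd
    rw [h, coeff_zero]
  apply hmin S hSI hS0 hd
  have : S.leadingCoeff = L.leadingCoeff % T.leadingCoeff := by
    rw [← hc, leadingCoeff, hd]
  rw [this]
  exact EuclideanDomain.mod_lt _ ht
end

section
/- Let I be an ideal of D[x], let d ∈ ℕ, and let T, T' ∈ I be nonzero polynomials of degree d whose leading coefficients both have minimal Euclidean norm among the leading coefficients of all nonzero degree-d elements of I. Then lc(T) and lc(T') are associates in D. -/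
open Polynomial

theorem stmt_4_aux {D : Type*} [EuclideanDomain D]
    (I : Ideal (Polynomial D)) (d : ℕ) (T T' : Polynomial D)
    (hTI : T ∈ I) (hT0 : T ≠ 0) (hTd : T.natDegree = d)
    (hmin : ∀ S ∈ I, S ≠ 0 → S.natDegree = d →
      ¬ EuclideanDomain.r S.leadingCoeff T.leadingCoeff)
    (hT'I : T' ∈ I) (hT'd : T'.natDegree = d) :
    T.leadingCoeff ∣ T'.leadingCoeff := by
  by_contra hnd
  have hne : T'.leadingCoeff % T.leadingCoeff ≠ 0 := fun h =>
    hnd (EuclideanDomain.mod_eq_zero.mp h)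
  set q := T'.leadingCoeff / T.leadingCoeff with hq
  have hc : (T' - C q * T).coeff d = T'.leadingCoeff % T.leadingCoeff := by
    have h1 : T'.coeff d = T'.leadingCoeff := by rw [← hT'd]; rfl
    have h2 : T.coeff d = T.leadingCoeff := by rw [← hTd]; rfl
    rw [coeff_sub, coeff_C_mul, h1, h2, sub_eq_iff_eq_add, hq]
    exact (EuclideanDomain.mod_add_div' _ _).symm
  have hle : (T' - C q * T).natDegree ≤ d :=
    (natDegree_sub_le _ _).trans
      (max_le hT'd.le ((natDegree_C_mul_le _ _).trans hTd.le))
  have hdeg : (T' - C q * T).natDegree = d :=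
    le_antisymm hle (le_natDegree_of_ne_zero (by rw [hc]; exact hne))
  refine hmin (T' - C q * T) (I.sub_mem hT'I (I.mul_mem_left _ hTI)) ?_ hdeg ?_
  · intro h
    rw [h, coeff_zero] at hc
    exact hne hc.symm
  · rw [leadingCoeff, hdeg, hc]
    exact EuclideanDomain.mod_lt _ (leadingCoeff_ne_zero.mpr hT0)

/-- Let `D` be a Euclidean domain, `I` an ideal of `D[x]`, `d ∈ ℕ`, and let
`T, T' ∈ I` be nonzero polynomials of degree `d` whose leading coefficients both have
minimal Euclidean norm (i.e. are minimal with respect to the Euclidean "smaller"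
relation) among the leading coefficients of all nonzero degree-`d` elements of `I`.
Then `lc T` and `lc T'` are associates in `D`. -/
theorem stmt_4 {D : Type*} [EuclideanDomain D]
    (I : Ideal (Polynomial D)) (d : ℕ) (T T' : Polynomial D)
    (hTI : T ∈ I) (hT0 : T ≠ 0) (hTd : T.natDegree = d)
    (hmin : ∀ S ∈ I, S ≠ 0 → S.natDegree = d →
      ¬ EuclideanDomain.r S.leadingCoeff T.leadingCoeff)
    (hT'I : T' ∈ I) (hT'0 : T' ≠ 0) (hT'd : T'.natDegree = d)
    (hmin' : ∀ S ∈ I, S ≠ 0 → S.natDegree = d →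
      ¬ EuclideanDomain.r S.leadingCoeff T'.leadingCoeff) :
    Associated T.leadingCoeff T'.leadingCoeff := by
  exact associated_of_dvd_dvd
    (stmt_4_aux I d T T' hTI hT0 hTd hmin hT'I hT'd)
    (stmt_4_aux I d T' T hT'I hT'0 hT'd hmin' hTI hTd)
end

section
/- Let (R_0, R_1, ..., R_ℓ, R_{ℓ+1}=0) be the subresultant PRS of A and B (not necessarily normal), and let t be the essential part of I at order d_A + d_B (which is defined, since x^{d_B}·A ∈ I has degree d_A + d_B). Then for every i with 2 ≤ i ≤ ℓ, the power t^{d_A + d_B - 2·d_{i-1} + 1} divides the content cont(R_i). -/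
open Polynomial

/-- `IsEssentialPart I n t` says that `t` is the essential part of the ideal `I` of
`D[x]` at order `n`: either `t` is the leading coefficient of some nonzero degree-`n`
element of `I` whose leading coefficient has minimal Euclidean norm (minimal with
respect to the Euclidean "smaller" relation) among all nonzero degree-`n` elements of
`I`, or `I` has no nonzero element of degree `n` and `t = 1`. -/
def IsEssentialPart {D : Type*} [EuclideanDomain D]
    (I : Ideal (Polynomial D)) (n : ℕ) (t : D) : Prop :=
  (∃ T ∈ I, T ≠ 0 ∧ T.natDegree = n ∧ T.leadingCoeff = t ∧
      ∀ L ∈ I, L ≠ 0 → L.natDegree = n → ¬ EuclideanDomain.r L.leadingCoeff t) ∨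
  ((¬ ∃ T ∈ I, T ≠ 0 ∧ T.natDegree = n) ∧ t = 1)

/-- columns -/
def colx (j e k : ℕ) : ℕ := if k = 0 then e else j + k

/-- minors -/
def Delt {F : Type*} [CommRing F] (j e m : ℕ) (v : ℕ → F[X]) : F :=
  (Matrix.of fun i k : Fin m => (v i).coeff (colx j e k)).det

/-- rows -/
noncomputable def rowv {F : Type*} [CommRing F] (a : ℕ) (P Q : F[X]) (i : ℕ) : F[X] :=
  if i < a then X ^ i * P else X ^ (i - a) * Q

lemma Delt_peel {F : Type*} [CommRing F] (j e m : ℕ) (hm : 1 ≤ m) (v : ℕ → F[X])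
    (hv : ∀ i < m, (v i).coeff (j + m) = 0) :
    Delt j e (m + 1) v = (v m).coeff (j + m) * Delt j e m v := by
  unfold Delt
  rw [Matrix.det_succ_column _ (Fin.last m), Fin.sum_univ_castSucc]
  have hc : colx j e m = j + m := by unfold colx; rw [if_neg (by omega)]
  rw [Finset.sum_eq_zero, zero_add]
  · have : (Fin.last m).succAbove = Fin.castSucc := by
      ext i; simp
    simp only [Matrix.of_apply, Fin.val_last, hc, this]
    rw [Even.neg_one_pow ⟨m, rfl⟩, one_mul]
    congr 1
  · intro i _
    simp only [Matrix.of_apply, Fin.val_last, hc, Fin.val_castSucc, hv i i.2]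
    simp

lemma Delt_congr {F : Type*} [CommRing F] (j e m : ℕ) (v w : ℕ → F[X])
    (h : ∀ i < m, v i = w i) : Delt j e m v = Delt j e m w := by
  unfold Delt
  congr 1
  ext i k
  simp [h i i.2]

lemma Delt_swap {F : Type*} [CommRing F] (j e a b : ℕ) (P Q : F[X]) :
    (Delt j e (a + b) (rowv a P Q)) ^ 2 = (Delt j e (b + a) (rowv b Q P)) ^ 2 := by
  rw [show b + a = a + b from add_comm b a]
  let σ : Equiv.Perm (Fin (a + b)) := finAddFlip.trans (finCongr (add_comm b a))
  have h : Delt j e (a + b) (rowv a P Q) =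
      (Equiv.Perm.sign σ : F) * Delt j e (a + b) (rowv b Q P) := by
    unfold Delt
    rw [← Matrix.det_permute]
    congr 1
    ext i k
    simp only [Matrix.submatrix_apply, Matrix.of_apply, id]
    congr 1
    refine Fin.addCases (fun i => ?_) (fun i => ?_) i
    · simp [σ, rowv]
    · simp [σ, rowv]
  rw [h, mul_pow]
  rcases Int.units_eq_one_or (Equiv.Perm.sign σ) with h | h <;> simp [h]

lemma Delt_repl {F : Type*} [CommRing F] (j e a b : ℕ) (l : F) (P P' Q u : F[X])
    (hP : C l * P = u * Q + P') (hu : ∀ i < a, (X ^ i * u).natDegree < b) :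
    l ^ a * Delt j e (a + b) (rowv a P Q) = Delt j e (a + b) (rowv a P' Q) := by
  let U : Matrix (Fin (a + b)) (Fin (a + b)) F := Matrix.of fun i k =>
    if (i : ℕ) < a then (if (k : ℕ) < a then (if i = k then l else 0)
      else - (X ^ (i : ℕ) * u).coeff (k - a)) else (if i = k then 1 else 0)
  have hU : U.det = l ^ a := by
    rw [Matrix.det_of_isUpperTriangular]
    · rw [Fin.prod_univ_add]
      simp [U]
    · intro i k hik
      simp only [id] at hik
      have h1 : (k : ℕ) < i := hik
      have h2 : i ≠ k := by rintro rfl; omega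
      simp only [U, Matrix.of_apply, h2, if_false]
      split_ifs <;> first | rfl | omega
  unfold Delt
  rw [← hU, ← Matrix.det_mul]
  congr 1
  ext i k
  rw [Matrix.mul_apply, Fin.sum_univ_add]
  simp only [Matrix.of_apply, U]
  refine Fin.addCases (fun i => ?_) (fun i => ?_) i
  · have e1 : P' = C l * P - u * Q := by rw [hP]; ring
    have e2 : X ^ (i : ℕ) * P' = C l * (X ^ (i : ℕ) * P) - (X ^ (i : ℕ) * u) * Q := by
      rw [e1]; ring
    have e3 := (X ^ (i : ℕ) * u).as_sum_range' b (hu i i.2)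
    simp only [rowv, Fin.val_castAdd, Fin.is_lt, if_true, Fin.val_natAdd, add_lt_iff_neg_left,
      not_lt_zero, if_false, add_tsub_cancel_left, Fin.castAdd_inj]
    rw [e2, coeff_sub, coeff_C_mul]
    simp only [ite_mul, zero_mul, Finset.sum_ite_eq, Finset.mem_univ, if_true]
    rw [sub_eq_add_neg]
    congr 1
    conv_rhs => rw [e3]
    rw [Finset.sum_mul, finsetSum_coeff, ← Finset.sum_neg_distrib, Finset.sum_range]
    refine Finset.sum_congr rfl fun x _ => ?_
    rw [← C_mul_X_pow_eq_monomial, mul_assoc, coeff_C_mul, neg_mul]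
  · simp only [rowv, Fin.val_natAdd, add_lt_iff_neg_left, not_lt_zero, if_false,
      add_tsub_cancel_left]
    rw [Finset.sum_eq_zero, zero_add]
    · simp
    intro x _
    rw [if_neg, zero_mul]
    intro h
    have := congrArg Fin.val h
    simp at this
    omega

lemma Delt_peels {F : Type*} [CommRing F] (j e a b n : ℕ) (P Q : F[X]) (ha : 1 ≤ a)
    (hP : P.natDegree ≤ j + b) (hQ : Q.natDegree = j + a) :
    Delt j e (a + (b + n)) (rowv a P Q) =
      Q.leadingCoeff ^ n * Delt j e (a + b) (rowv a P Q) := by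
  induction n with
  | zero => simp
  | succ n ih =>
    rw [show a + (b + (n + 1)) = (a + (b + n)) + 1 by ring, Delt_peel _ _ _ (by omega), ih]
    · have : (rowv a P Q (a + (b + n))).coeff (j + (a + (b + n))) = Q.leadingCoeff := by
        simp only [rowv, add_lt_iff_neg_left, not_lt_zero, if_false, add_tsub_cancel_left]
        rw [show j + (a + (b + n)) = Q.natDegree + (b + n) by omega, coeff_X_pow_mul]
        rfl
      rw [this]; ring
    · intro i hi
      apply coeff_eq_zero_of_natDegree_lt
      unfold rowv
      split_ifs with h
      · calc _ ≤ (X ^ i : F[X]).natDegree + P.natDegree := natDegree_mul_le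
          _ ≤ i + P.natDegree := by gcongr; exact natDegree_X_pow_le i
          _ < _ := by omega
      · calc _ ≤ (X ^ (i - a) : F[X]).natDegree + Q.natDegree := natDegree_mul_le
          _ ≤ (i - a) + Q.natDegree := by gcongr; exact natDegree_X_pow_le _
          _ < _ := by omega

/-- The basic step. -/
lemma Delt_step {F : Type*} [Field F] (j e : ℕ) (P Q R u : F[X]) (l m : F)
    (hl : l • P = u * Q + m • R) (hPQ : Q.natDegree ≤ P.natDegree) (hQ : j < Q.natDegree)
    (hRQ : R.natDegree ≤ Q.natDegree) (b : ℕ) (hR : R.natDegree ≤ j + b)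
    (hb : b ≤ P.natDegree - j) :
    l ^ (Q.natDegree - j) *
      Delt j e ((Q.natDegree - j) + (P.natDegree - j)) (rowv (Q.natDegree - j) P Q) =
    m ^ (Q.natDegree - j) * Q.leadingCoeff ^ (P.natDegree - j - b) *
      Delt j e ((Q.natDegree - j) + b) (rowv (Q.natDegree - j) R Q) := by
  rw [smul_eq_C_mul, smul_eq_C_mul] at hl
  have hu : u.natDegree ≤ P.natDegree - Q.natDegree := by
    by_cases h0 : u = 0
    · simp [h0]
    have hQ0 : Q ≠ 0 := by rintro rfl; simp at hQ
    have h1 : (u * Q).natDegree ≤ P.natDegree := by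
      have : u * Q = C l * P - C m * R := by rw [hl]; ring
      rw [this]
      refine (natDegree_sub_le _ _).trans (max_le (natDegree_C_mul_le _ _) ?_)
      exact (natDegree_C_mul_le _ _).trans (hRQ.trans hPQ)
    rw [natDegree_mul h0 hQ0] at h1
    omega
  rw [Delt_repl j e _ _ l P (C m * R) Q u hl,
    ← Delt_repl j e _ _ m R (C m * R) Q 0 (by simp)]
  · obtain ⟨n, hn⟩ := Nat.exists_eq_add_of_le hb
    rw [hn, Delt_peels j e _ b n R Q (by omega) hR (by omega)]
    rw [add_tsub_cancel_left]; ring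
  · intro i hi; simp; omega
  · intro i hi
    calc _ ≤ (X ^ i : F[X]).natDegree + u.natDegree := natDegree_mul_le
      _ ≤ i + u.natDegree := by gcongr; exact natDegree_X_pow_le i
      _ < _ := by omega

lemma top_dvd {D : Type*} [EuclideanDomain D] (I : Ideal D[X]) (n : ℕ) (t : D)
    (ht : IsEssentialPart I n t) (L : D[X]) (hL : L ∈ I) (hn : L.natDegree ≤ n) :
    t ∣ L.coeff n := by
  rcases ht with ⟨T, hT, hT0, hTn, hTt, hmin⟩ | ⟨-, rfl⟩
  swap
  · exact one_dvd _
  have ht0 : t ≠ 0 := by rw [← hTt]; simpa using hT0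
  by_contra hnd
  have hr : L.coeff n % t ≠ 0 := fun h => hnd (EuclideanDomain.mod_eq_zero.1 h)
  let W := L - C (L.coeff n / t) * T
  have hWn : W.natDegree ≤ n := by
    refine (natDegree_sub_le _ _).trans (max_le hn ?_)
    exact (natDegree_C_mul_le _ _).trans hTn.le
  have hTc : T.coeff n = t := by rw [← hTt, ← hTn]; rfl
  have hWc : W.coeff n = L.coeff n % t := by
    simp only [W, coeff_sub, coeff_C_mul, hTc]
    rw [sub_eq_iff_eq_add, mul_comm]
    exact (EuclideanDomain.mod_add_div _ _).symm
  have hWd : W.natDegree = n := by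
    refine le_antisymm hWn (le_natDegree_of_ne_zero ?_)
    rw [hWc]; exact hr
  have hW0 : W ≠ 0 := by
    intro h; rw [h] at hWc; exact hr (by simpa using hWc.symm)
  refine hmin W (I.sub_mem hL (I.mul_mem_left _ hT)) hW0 hWd ?_
  rw [leadingCoeff, hWd, hWc]
  exact EuclideanDomain.mod_lt _ ht0

lemma exists_T {D : Type*} [EuclideanDomain D] (I : Ideal D[X]) (n : ℕ) :
    ∃ T ∈ I, T.natDegree ≤ n ∧ ∀ P ∈ I, P.natDegree ≤ n → T.coeff n ∣ P.coeff n := by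
  have hmem : ∀ x, x ∈ I.leadingCoeffNth n ↔ ∃ p ∈ I, p.natDegree ≤ n ∧ p.coeff n = x := by
    intro x
    simp only [Ideal.leadingCoeffNth, Ideal.degreeLE, Submodule.mem_map, lcoeff_apply,
      Submodule.mem_inf, mem_degreeLE, natDegree_le_iff_degree_le]
    constructor
    · rintro ⟨p, ⟨h1, h2⟩, h3⟩
      exact ⟨p, h2, h1, h3⟩
    · rintro ⟨p, h2, h1, h3⟩
      exact ⟨p, ⟨h1, h2⟩, h3⟩
  obtain ⟨g, hg⟩ := (IsPrincipalIdealRing.principal (I.leadingCoeffNth n)).principal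
  obtain ⟨T, hT, hTn, hTg⟩ := (hmem g).1 (by rw [hg]; exact Submodule.mem_span_singleton_self g)
  refine ⟨T, hT, hTn, fun P hP hPn => ?_⟩
  have : P.coeff n ∈ I.leadingCoeffNth n := (hmem _).2 ⟨P, hP, hPn, rfl⟩
  rw [hg] at this
  rw [hTg]
  exact Ideal.mem_span_singleton.1 this

lemma reduce_T {D : Type*} [EuclideanDomain D] (I : Ideal D[X]) (T : ℕ → D[X])
    (hT : ∀ n, T n ∈ I) (hTn : ∀ n, (T n).natDegree ≤ n)
    (hTd : ∀ n, ∀ P ∈ I, P.natDegree ≤ n → (T n).coeff n ∣ P.coeff n) (j n : ℕ) :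
    ∀ P ∈ I, P.natDegree ≤ j + n → ∃ (c : ℕ → D) (r : D[X]), r.natDegree ≤ j ∧
      P = ∑ k ∈ Finset.range n, C (c k) * T (j + k + 1) + r := by
  induction n with
  | zero => intro P _ h; exact ⟨0, P, h, by simp⟩
  | succ n ih =>
    intro P hP hPn
    obtain ⟨q, hq⟩ := hTd (j + n + 1) P hP hPn
    obtain ⟨c, r, hr, hc⟩ := ih (P - C q * T (j + n + 1))
      (I.sub_mem hP (I.mul_mem_left _ (hT _))) (by
        have h1 : (P - C q * T (j + n + 1)).natDegree ≤ j + n + 1 :=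
          (natDegree_sub_le _ _).trans
            (max_le hPn ((natDegree_C_mul_le _ _).trans (hTn _)))
        rw [natDegree_le_iff_coeff_eq_zero] at h1 ⊢
        intro N hN
        rcases Nat.lt_or_ge (j + n + 1) N with h | h
        · exact h1 N h
        · have : N = j + n + 1 := by omega
          subst this
          rw [coeff_sub, coeff_C_mul, hq]; ring)
    refine ⟨fun k => if k = n then q else c k, r, hr, ?_⟩
    rw [Finset.sum_range_succ]
    simp only [if_true]
    rw [Finset.sum_congr rfl
      (g := fun k => C (c k) * T (j + k + 1))]
    · rw [sub_eq_iff_eq_add] at hc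
      rw [hc]; ring
    · intro k hk
      rw [if_neg (by have := Finset.mem_range.1 hk; omega)]

lemma Delt_dvd {D : Type*} [EuclideanDomain D] (I : Ideal D[X]) (N : ℕ) (t : D)
    (ht : ∀ L ∈ I, L.natDegree ≤ N → t ∣ L.coeff N) (j e m : ℕ) (hm : j + m ≤ N)
    (v : ℕ → D[X]) (hv : ∀ i < m + 1, v i ∈ I) (hvn : ∀ i < m + 1, (v i).natDegree ≤ j + m) :
    t ^ m ∣ Delt j e (m + 1) v := by
  have ht' : ∀ n ≤ N, ∀ L ∈ I, L.natDegree ≤ n → t ∣ L.coeff n := by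
    intro n hn L hL hLn
    have := ht (X ^ (N - n) * L) (I.mul_mem_left _ hL) (natDegree_mul_le.trans (by
      have := natDegree_X_pow_le (R := D) (N - n); omega))
    have e : N = n + (N - n) := by omega
    nth_rewrite 2 [e] at this
    rwa [coeff_X_pow_mul] at this
  choose T hT hTn hTd using exists_T I
  have hred := fun i : Fin (m + 1) => reduce_T I T hT hTn hTd j m (v i) (hv i i.2) (hvn i i.2)
  choose c r hr hc using hred
  let U : Matrix (Fin (m + 1)) (Fin (m + 1)) D := Matrix.of fun i k =>
    Fin.cases (motive := fun _ => D) (if k = 0 then 1 else 0)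
      (fun i' : Fin m => (T (j + i' + 1)).coeff (colx j e k)) i
  let W : Matrix (Fin (m + 1)) (Fin (m + 1)) D := Matrix.of fun i k =>
    Fin.cases (motive := fun _ => D) ((r i).coeff e) (fun k' : Fin m => c i k') k
  have hM : (Matrix.of fun i k : Fin (m + 1) => (v i).coeff (colx j e k)) = W * U := by
    ext i k
    rw [Matrix.mul_apply, Fin.sum_univ_succ]
    simp only [Matrix.of_apply, W, U, Fin.cases_zero, Fin.cases_succ]
    rw [hc i, coeff_add, finsetSum_coeff, Finset.sum_range, add_comm]
    congr 1
    · by_cases hk : k = 0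
      · subst hk; simp [colx]
      · rw [if_neg hk, mul_zero]
        apply coeff_eq_zero_of_natDegree_lt
        have : (k : ℕ) ≠ 0 := fun h => hk (Fin.ext h)
        have h3 := hr i
        have h4 : 0 < (k : ℕ) := Nat.pos_of_ne_zero this
        simp only [colx]
        rw [if_neg (by assumption)]
        omega
    · simp
  have hU : U.det = ∏ i : Fin m, (T (j + i + 1)).coeff (j + i + 1) := by
    rw [Matrix.det_of_isLowerTriangular]
    · rw [Fin.prod_univ_succ]
      simp [U, colx, add_assoc]
    · intro i k hik
      have h1 : (i : ℕ) < k := hik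
      refine Fin.cases (fun h1 => ?_) (fun i h1 => ?_) i h1
      · have : k ≠ 0 := by rintro rfl; simp at h1
        simp [U, this]
      · simp only [U, Matrix.of_apply, Fin.cases_succ]
        apply coeff_eq_zero_of_natDegree_lt
        have := hTn (j + i + 1)
        simp only [Fin.val_succ] at h1
        simp only [colx]
        split_ifs <;> omega
  unfold Delt
  rw [hM, Matrix.det_mul, hU]
  apply Dvd.dvd.mul_left
  have := Finset.prod_dvd_prod_of_dvd (s := (Finset.univ : Finset (Fin m))) (f := fun _ => t)
    (g := fun i : Fin m => (T (j + i + 1)).coeff (j + i + 1))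
    (fun (i : Fin m) _ => ht' _ (by have := i.2; omega) _ (hT _) (hTn _))
  simpa using this

lemma alg_step {F : Type*} [Field F] (c g p p' s s' s1 : F) (x δ δ' : ℕ)
    (hc : c ≠ 0) (hg : g ≠ 0) (hp : p ≠ 0) (hx : 1 ≤ x) (hδ' : δ' ≤ x)
    (h0 : δ = 0 → p = 1) (hp' : p' = c ^ δ / p ^ (δ - 1))
    (h1 : g ^ x * p ^ (δ + x - 1) * s1 = s)
    (h2 : (c ^ (δ + 1)) ^ x * s = (g * p ^ δ) ^ x * c ^ (δ + δ') * s') :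
    c ^ (x - δ') * p' ^ (x - 1) * s1 = s' := by
  obtain ⟨y, rfl⟩ : ∃ y, x = y + 1 := ⟨x - 1, by omega⟩
  obtain ⟨z, hz⟩ := Nat.exists_eq_add_of_le hδ'
  have e1 : y + 1 - δ' = z := by omega
  have e2 : c ^ δ' * c ^ z = c ^ (y + 1) := by rw [hz, pow_add]
  have hne : (g * p ^ δ) ^ (y + 1) * c ^ (δ + δ') ≠ 0 := by positivity
  apply mul_left_cancel₀ hne
  rw [← h2, ← h1, e1]
  simp only [add_tsub_cancel_right]
  rcases Nat.eq_zero_or_pos δ with h | h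
  · subst h
    have := h0 rfl
    subst this
    simp at hp'
    subst hp'
    simp only [one_pow, zero_add, mul_one, pow_one]
    linear_combination g ^ (y + 1) * s1 * e2
  · obtain ⟨w, rfl⟩ : ∃ w, δ = w + 1 := ⟨δ - 1, by omega⟩
    simp only [add_tsub_cancel_right] at hp'
    have e3 : p' ^ y * (p ^ w) ^ y = (c ^ (w + 1)) ^ y := by
      rw [← mul_pow, hp', div_mul_cancel₀ _ (by positivity)]
    have e4 : w + 1 + (y + 1) - 1 = w + y + 1 := by omega
    rw [e4]
    calc _ = g ^ (y + 1) * s1 * p ^ (w + y + 1) * c ^ (w + 1) * (c ^ δ' * c ^ z) *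
          (p' ^ y * (p ^ w) ^ y) := by ring
      _ = _ := by rw [e2, e3]; ring

/-- Let `D` be a Euclidean domain with a normalized gcd and fraction
field `K`, and let `A, B ∈ D[x]` be nonzero with `d_A := deg A ≥ d_B := deg B ≥ 1`.
Let `(R 0, R 1, …, R ℓ, R (ℓ+1) = 0)` be the subresultant PRS of `A` and `B` (not
necessarily normal; with quotients `Q i`, multipliers `α i`, `β i` given by the
subresultant formulas via the auxiliary sequence `ψ i`, degrees `d i = deg (R i)`, and
all terms lying in `D[x]` as witnessed by `R' i`), and let `t` be the essential part
of the ideal `I` generated by `A` and `B` at order `d_A + d_B`.  Then for every `i`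
with `2 ≤ i ≤ ℓ`, the power `t^(d_A + d_B - 2·d (i-1) + 1)` divides `cont (R i)`. -/
theorem stmt_8 {D : Type*} [EuclideanDomain D] [NormalizedGCDMonoid D]
    (A B : Polynomial D) (hA : A ≠ 0) (hB : B ≠ 0)
    (hdeg : B.natDegree ≤ A.natDegree) (hB1 : 1 ≤ B.natDegree)
    -- the subresultant PRS `R 0 = A, R 1 = B, …, R ℓ ≠ 0, R (ℓ+1) = 0` of `A` and `B`
    -- over the fraction field `K` of `D`, with quotients `Q i`, scalars `α i, β i`,
    -- degrees `d i`, the auxiliary sequence `ψ i`, and terms `R' i` in `D[x]`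
    (ℓ : ℕ) (R Q : ℕ → Polynomial (FractionRing D))
    (α β ψ : ℕ → FractionRing D)
    (R' : ℕ → Polynomial D) (d : ℕ → ℕ)
    (hR0 : R 0 = A.map (algebraMap D (FractionRing D)))
    (hR1 : R 1 = B.map (algebraMap D (FractionRing D)))
    (hRne : ∀ i, i ≤ ℓ → R i ≠ 0)
    (hRlast : R (ℓ + 1) = 0)
    (hd : ∀ i, d i = (R i).natDegree)
    (hαne : ∀ i, 1 ≤ i → i ≤ ℓ → α i ≠ 0)
    (hβne : ∀ i, 1 ≤ i → i ≤ ℓ → β i ≠ 0)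
    (hdesc : ∀ i, 1 ≤ i → i ≤ ℓ → (R (i + 1)).degree < (R i).degree)
    (hrec : ∀ i, 1 ≤ i → i ≤ ℓ → α i • R (i - 1) = Q i * R i + β i • R (i + 1))
    (hα : ∀ i, 1 ≤ i → i ≤ ℓ → α i = (R i).leadingCoeff ^ (d (i - 1) - d i + 1))
    (hψ1 : ψ 1 = -1)
    (hψ : ∀ i, 2 ≤ i → i ≤ ℓ →
      ψ i = (-(R (i - 1)).leadingCoeff) ^ (d (i - 2) - d (i - 1)) /
        ψ (i - 1) ^ (d (i - 2) - d (i - 1) - 1))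
    (hβ1 : β 1 = (-1) ^ (d 0 - d 1 + 1))
    (hβ : ∀ i, 2 ≤ i → i ≤ ℓ →
      β i = -(R (i - 1)).leadingCoeff * ψ i ^ (d (i - 1) - d i))
    (hR' : ∀ i, i ≤ ℓ + 1 → (R' i).map (algebraMap D (FractionRing D)) = R i)
    (t : D)
    (ht : IsEssentialPart (Ideal.span ({A, B} : Set (Polynomial D)))
      (A.natDegree + B.natDegree) t) :
    ∀ i, 2 ≤ i → i ≤ ℓ →
      t ^ (A.natDegree + B.natDegree - 2 * d (i - 1) + 1) ∣ (R' i).content := by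
  intro i hi hiℓ
  obtain ⟨n, rfl⟩ : ∃ n, i = n + 1 := ⟨i - 1, by omega⟩
  simp only [add_tsub_cancel_right]
  have hn1 : 1 ≤ n := by omega
  have hlc : ∀ k, k ≤ ℓ → (R k).leadingCoeff ≠ 0 := fun k hk => leadingCoeff_ne_zero.2 (hRne k hk)
  have hdlt : ∀ k, 1 ≤ k → k + 1 ≤ ℓ → d (k + 1) < d k := by
    intro k h1 h2
    rw [hd, hd]
    exact natDegree_lt_natDegree (hRne _ h2) (hdesc k h1 (by omega))
  have hinj : Function.Injective (algebraMap D (FractionRing D)) :=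
    IsFractionRing.injective D (FractionRing D)
  have hd0 : d 0 = A.natDegree := by rw [hd, hR0, natDegree_map_eq_of_injective hinj]
  have hd1 : d 1 = B.natDegree := by rw [hd, hR1, natDegree_map_eq_of_injective hinj]
  have hdle : ∀ k, k + 1 ≤ ℓ → d (k + 1) ≤ d k := by
    intro k hk
    rcases Nat.eq_zero_or_pos k with h | h
    · subst h; rw [zero_add, hd0, hd1]; exact hdeg
    · exact (hdlt k h hk).le
  have hdn : ∀ m, ∀ k, k + m ≤ ℓ → d (k + m) ≤ d k := by
    intro m
    induction m with
    | zero => intro k _; exact le_rfl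
    | succ m ih => intro k hk; exact (hdle (k + m) hk).trans (ih k (by omega))
  have hdanti : ∀ k l, k ≤ l → l ≤ ℓ → d l ≤ d k := by
    intro k l h1 h2
    obtain ⟨m, rfl⟩ := Nat.exists_eq_add_of_le h1
    exact hdn m k h2
  have hdpos : 1 ≤ d n := by have := hdlt n hn1 hiℓ; omega
  obtain ⟨j, hj⟩ : ∃ j, d n = j + 1 := ⟨d n - 1, by omega⟩
  -- squared data
  let g : ℕ → FractionRing D := fun k => if k = 0 then 1 else (R k).leadingCoeff ^ 2
  have hg0 : ∀ k, k ≤ ℓ → g k ≠ 0 := by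
    intro k hk
    simp only [g]
    split_ifs
    · exact one_ne_zero
    · exact pow_ne_zero _ (hlc k hk)
  have hβsq : ∀ k, 1 ≤ k → k ≤ ℓ → β k ^ 2 = g (k - 1) * (ψ k ^ 2) ^ (d (k - 1) - d k) := by
    intro k h1 h2
    rcases Nat.lt_or_ge k 2 with h | h
    · have : k = 1 := by omega
      subst this
      rw [hβ1, hψ1]
      simp only [g]
      rw [← pow_mul, mul_comm (d 0 - d 1 + 1), pow_mul]
      simp
    · rw [hβ k h h2]
      simp only [g]
      rw [if_neg (by omega)]
      ring
  have hψ0 : ∀ k, 1 ≤ k → k ≤ ℓ → ψ k ≠ 0 := by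
    intro k h1 h2 h3
    rcases Nat.lt_or_ge k 2 with h | h
    · have : k = 1 := by omega
      subst this
      rw [hψ1] at h3
      simp at h3
    · apply hβne k h1 h2
      rw [hβ k h h2, h3]
      have := hdlt (k - 1) (by omega) (by omega)
      rw [show k - 1 + 1 = k by omega] at this
      rw [zero_pow (by omega), mul_zero]
  rw [dvd_content_iff_C_dvd, C_dvd_iff_dvd_coeff]
  intro e
  let S : ℕ → FractionRing D := fun k =>
    (Delt j e ((d k - j) + (d (k - 1) - j)) (rowv (d k - j) (R (k - 1)) (R k))) ^ 2
  have hinv : ∀ k, 1 ≤ k → k ≤ n →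
      g (k - 1) ^ (d k - j) * (ψ k ^ 2) ^ (d (k - 1) - d k + (d k - j) - 1) * S 1 = S k := by
    intro k hk
    induction k, hk using Nat.le_induction with
    | base =>
      intro _
      simp only [g, hψ1]
      simp
    | succ k hk ih =>
      intro hkn
      have ih := ih (by omega)
      have hk1 : d k ≤ d (k - 1) := hdanti _ _ (by omega) (by omega)
      have hk2 : d (k + 1) < d k := hdlt k hk (by omega)
      have hk3 : d n ≤ d (k + 1) := hdanti _ _ (by omega) (by omega)
      have hs := Delt_step j e (R (k - 1)) (R k) (R (k + 1)) (Q k) (α k) (β k)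
        (hrec k hk (by omega)) (by rw [← hd, ← hd]; exact hk1) (by rw [← hd]; omega)
        (by rw [← hd, ← hd]; omega) (d (k + 1) - j) (by rw [← hd]; omega)
        (by rw [← hd]; omega)
      simp only [← hd] at hs
      have hs2 := congrArg (fun x => x ^ 2) hs
      simp only [mul_pow] at hs2
      rw [Delt_swap j e (d k - j) (d (k + 1) - j)] at hs2
      have hgk : g k = (R k).leadingCoeff ^ 2 := by simp only [g]; rw [if_neg (by omega)]
      have key := alg_step (g k) (g (k - 1)) (ψ k ^ 2) (ψ (k + 1) ^ 2) (S k) (S (k + 1)) (S 1)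
        (d k - j) (d (k - 1) - d k) (d k - d (k + 1)) (hg0 k (by omega)) (hg0 _ (by omega))
        (pow_ne_zero _ (hψ0 k hk (by omega))) (by omega) (by omega) ?_ ?_ ih ?_
      · simp only [add_tsub_cancel_right]
        rw [← key]
        congr 3 <;> omega
      · intro h
        rcases Nat.lt_or_ge k 2 with h' | h'
        · have : k = 1 := by omega
          subst this
          rw [hψ1]; simp
        · have := hdlt (k - 1) (by omega) (by omega)
          rw [show k - 1 + 1 = k by omega] at this
          omega
      · rw [hψ (k + 1) (by omega) (by omega), hgk]
        simp only [add_tsub_cancel_right, show k + 1 - 2 = k - 1 by omega]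
        rw [div_pow, ← pow_mul, ← pow_mul, ← pow_mul, ← pow_mul, mul_comm _ 2, pow_mul,
          neg_sq, ← pow_mul, mul_comm _ 2]
      · rw [← hβsq k hk (by omega), hgk]
        simp only [S, add_tsub_cancel_right]
        rw [hα k hk (by omega)] at hs2
        rw [show d (k - 1) - j - (d (k + 1) - j) = d (k - 1) - d k + (d k - d (k + 1)) by omega]
          at hs2
        linear_combination hs2
  have hfin : S 1 = (R (n + 1)).coeff e ^ 2 := by
    have h1 := hinv n hn1 le_rfl
    have hk1 : d n ≤ d (n - 1) := hdanti _ _ (by omega) (by omega)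
    have hk2 : d (n + 1) < d n := hdlt n hn1 hiℓ
    have hs := Delt_step j e (R (n - 1)) (R n) (R (n + 1)) (Q n) (α n) (β n)
        (hrec n hn1 (by omega)) (by rw [← hd, ← hd]; exact hk1) (by rw [← hd]; omega)
        (by rw [← hd, ← hd]; omega) 0 (by rw [← hd]; omega)
        (by omega)
    simp only [← hd] at hs
    have hD : Delt j e (d n - j + 0) (rowv (d n - j) (R (n + 1)) (R n)) =
        (R (n + 1)).coeff e := by
      rw [show d n - j = 1 by omega]
      simp [Delt, rowv, colx]
    rw [hD, hα n hn1 (by omega), show d (n - 1) - j - 0 = d (n - 1) - d n + 1 by omega] at hs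
    rw [show d n - j = 1 by omega] at h1 hs
    rw [pow_one, pow_one, mul_comm (β n), mul_assoc] at hs
    have hs' := mul_left_cancel₀ (pow_ne_zero _ (hlc n (by omega))) hs
    have hb := hβsq n hn1 (by omega)
    rw [pow_one, add_tsub_cancel_right, ← hb] at h1
    apply mul_left_cancel₀ (pow_ne_zero 2 (hβne n hn1 (by omega)))
    rw [h1]
    simp only [S]
    rw [show d n - j = 1 by omega, hs']
    ring
  -- descend to `D`
  have hB1n : d n ≤ B.natDegree := by rw [← hd1]; exact hdanti _ _ hn1 (by omega)
  have hmap : algebraMap D (FractionRing D)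
      (Delt j e ((B.natDegree - j) + (A.natDegree - j)) (rowv (B.natDegree - j) A B)) =
      Delt j e ((d 1 - j) + (d (1 - 1) - j)) (rowv (d 1 - j) (R (1 - 1)) (R 1)) := by
    rw [show 1 - 1 = 0 from rfl, hR0, hR1, hd0, hd1]
    unfold Delt
    rw [RingHom.map_det]
    congr 1
    ext a b
    simp only [RingHom.mapMatrix_apply, Matrix.map_apply, Matrix.of_apply, ← coeff_map]
    congr 1
    unfold rowv
    split_ifs <;> simp
  have hsq : (Delt j e ((B.natDegree - j) + (A.natDegree - j)) (rowv (B.natDegree - j) A B)) ^ 2 =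
      ((R' (n + 1)).coeff e) ^ 2 := by
    apply hinj
    rw [map_pow, map_pow, hmap, ← coeff_map, hR' (n + 1) (by omega)]
    exact hfin
  have hdvd : t ^ (A.natDegree + B.natDegree - 2 * d n + 1) ∣
      Delt j e ((B.natDegree - j) + (A.natDegree - j)) (rowv (B.natDegree - j) A B) := by
    have hAmem : A ∈ Ideal.span ({A, B} : Set (Polynomial D)) := Ideal.subset_span (by simp)
    have hBmem : B ∈ Ideal.span ({A, B} : Set (Polynomial D)) := Ideal.subset_span (by simp)
    rw [show (B.natDegree - j) + (A.natDegree - j) =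
      (A.natDegree + B.natDegree - 2 * d n + 1) + 1 by omega]
    apply Delt_dvd _ _ t (fun L hL hLn => top_dvd _ _ t ht L hL hLn)
    · omega
    · intro i _
      unfold rowv
      split_ifs
      · exact Ideal.mul_mem_left _ _ hAmem
      · exact Ideal.mul_mem_left _ _ hBmem
    · intro i _
      unfold rowv
      split_ifs
      · refine natDegree_mul_le.trans ?_
        have := natDegree_X_pow_le (R := D) i
        omega
      · refine natDegree_mul_le.trans ?_
        have := natDegree_X_pow_le (R := D) (i - (B.natDegree - j))
        omega
  rcases sq_eq_sq_iff_eq_or_eq_neg.1 hsq with h | h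
  · rwa [← h]
  · rw [h] at hdvd
    exact (dvd_neg.1 hdvd)
end

section
/- Let t be the essential part of I at order d_A + d_B (which is defined, since x^{d_B}·A ∈ I has degree d_A + d_B). Then t divides gcd(lc(A), lc(B)) in D. -/
open Polynomial

/-- Let `D` be a Euclidean domain with a normalized gcd, `A, B ∈ D[x]`
nonzero with `deg A ≥ deg B ≥ 1`, and let `t` be the essential part of the ideal `I`
generated by `A` and `B` at order `deg A + deg B`.  Then `t ∣ gcd (lc A) (lc B)`. -/
theorem stmt_9 {D : Type*} [EuclideanDomain D] [NormalizedGCDMonoid D]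
    (A B : Polynomial D) (hA : A ≠ 0) (hB : B ≠ 0)
    (hdeg : B.natDegree ≤ A.natDegree) (hB1 : 1 ≤ B.natDegree)
    (t : D)
    (ht : IsEssentialPart (Ideal.span ({A, B} : Set (Polynomial D)))
      (A.natDegree + B.natDegree) t) :
    t ∣ gcd A.leadingCoeff B.leadingCoeff := by
  rcases ht with ⟨T, hTI, hT0, hTn, hTt, hmin⟩ | ⟨-, rfl⟩
  · have ht0 : t ≠ 0 := by
      rw [← hTt]; exact leadingCoeff_ne_zero.mpr hT0
    have hTc : T.coeff (A.natDegree + B.natDegree) = t := by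
      rw [← hTn]; exact hTt
    have key : ∀ L ∈ Ideal.span ({A, B} : Set (Polynomial D)),
        L.natDegree = A.natDegree + B.natDegree → t ∣ L.leadingCoeff := by
      intro L hL hLn
      have hLc : L.coeff (A.natDegree + B.natDegree) = L.leadingCoeff := by
        rw [← hLn]; rfl
      rw [← EuclideanDomain.mod_eq_zero]
      by_contra hne
      have hdm := EuclideanDomain.div_add_mod L.leadingCoeff t
      set q := L.leadingCoeff / t with hq
      have hMc : (L - C q * T).coeff (A.natDegree + B.natDegree) = L.leadingCoeff % t := by
        rw [coeff_sub, coeff_C_mul, hTc, hLc]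
        linear_combination -hdm
      have hMn : (L - C q * T).natDegree = A.natDegree + B.natDegree := by
        apply le_antisymm
        · refine (natDegree_sub_le _ _).trans (max_le hLn.le ?_)
          exact (natDegree_C_mul_le _ _).trans hTn.le
        · apply le_natDegree_of_ne_zero
          rw [hMc]; exact hne
      have hMl : (L - C q * T).leadingCoeff = L.leadingCoeff % t := by
        rw [← hMc, ← hMn]; rfl
      refine hmin (L - C q * T) (Ideal.sub_mem _ hL (Ideal.mul_mem_left _ _ hTI)) ?_ hMn ?_
      · intro h0
        rw [h0, coeff_zero] at hMc
        exact hne hMc.symm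
      · rw [hMl]
        exact EuclideanDomain.mod_lt _ ht0
    apply dvd_gcd
    · have h := key (A * X ^ B.natDegree)
        (Ideal.mul_mem_right _ _ (Ideal.subset_span (by simp)))
        (natDegree_mul_X_pow _ hA)
      simpa using h
    · have h := key (B * X ^ A.natDegree)
        (Ideal.mul_mem_right _ _ (Ideal.subset_span (by simp)))
        (by rw [natDegree_mul_X_pow _ hB, add_comm])
      simpa using h
  · exact one_dvd _
end

section
/- Let (R_0, R_1, ..., R_ℓ, R_{ℓ+1}=0) be the subresultant PRS of A and B, let γ_0 = γ_1 = 1 and let γ_2, ..., γ_{ℓ+1} ∈ K be arbitrary nonzero scalars; set R̃_i := (1/γ_i)·R_i for 0 ≤ i ≤ ℓ+1. Then (R̃_0, R̃_1, ..., R̃_ℓ, R̃_{ℓ+1}=0) is a PRS of A and B with multipliers α̃_i = lc(R̃_i)^{d_{i-1}-d_i+1}, and β̃_1 = (-1)^{d_0-d_1+1}·γ_2, β̃_i = (-lc(R̃_{i-1})·ψ̃_i^{d_{i-1}-d_i} / γ_i^{d_{i-1}-d_i+1})·γ_{i+1} for 2 ≤ i ≤ ℓ, where ψ̃_1 = -1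 and ψ̃_i = (-γ_{i-1}·lc(R̃_{i-1}))^{d_{i-2}-d_{i-1}} / ψ̃_{i-1}^{d_{i-2}-d_{i-1}-1}; that is, for each 1 ≤ i ≤ ℓ there exists Q̃_i ∈ K[x] with α̃_i·R̃_{i-1} = Q̃_i·R̃_i + β̃_i·R̃_{i+1}. -/
open Polynomial

/-- Let `D` be a UFD with a normalized gcd and fraction field `K`, and
let `A, B ∈ D[x]` be nonzero with `deg A ≥ deg B ≥ 1`.  Let
`(R 0, R 1, …, R ℓ, R (ℓ+1) = 0)` be the subresultant PRS of `A` and `B` (with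
quotients `Q i`, multipliers `α i`, `β i` given by the subresultant formulas via the
auxiliary sequence `ψ i`, degrees `d i = deg (R i)`, and all terms lying in `D[x]` as
witnessed by `R' i`).  Let `γ 0 = γ 1 = 1` and let `γ 2, …, γ (ℓ+1)` be arbitrary
nonzero scalars in `K`, and set `R̃ i := (γ i)⁻¹ • R i`.  Then
`(R̃ 0, R̃ 1, …, R̃ ℓ, R̃ (ℓ+1) = 0)` is a PRS of `A` and `B` with the multipliers
`α̃ i`, `β̃ i` defined (via `ψ̃ i`) in the hypotheses below; that is, for each
`1 ≤ i ≤ ℓ` the scalars `α̃ i`, `β̃ i` are nonzero, the degrees descend, and there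
exists `Q̃ i ∈ K[x]` with `α̃ i • R̃ (i-1) = Q̃ i * R̃ i + β̃ i • R̃ (i+1)`. -/
theorem stmt_12 {D : Type*} [CommRing D] [IsDomain D] [NormalizedGCDMonoid D]
    [UniqueFactorizationMonoid D]
    (A B : Polynomial D) (hA : A ≠ 0) (hB : B ≠ 0)
    (hdeg : B.natDegree ≤ A.natDegree) (hB1 : 1 ≤ B.natDegree)
    -- the subresultant PRS `R 0 = A, R 1 = B, …, R ℓ ≠ 0, R (ℓ+1) = 0` of `A` and `B`
    -- over the fraction field `K` of `D`, with quotients `Q i`, scalars `α i, β i`,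
    -- degrees `d i`, the auxiliary sequence `ψ i`, and terms `R' i` in `D[x]`
    (ℓ : ℕ) (R Q : ℕ → Polynomial (FractionRing D))
    (α β ψ : ℕ → FractionRing D)
    (R' : ℕ → Polynomial D) (d : ℕ → ℕ)
    (hR0 : R 0 = A.map (algebraMap D (FractionRing D)))
    (hR1 : R 1 = B.map (algebraMap D (FractionRing D)))
    (hRne : ∀ i, i ≤ ℓ → R i ≠ 0)
    (hRlast : R (ℓ + 1) = 0)
    (hd : ∀ i, d i = (R i).natDegree)
    (hαne : ∀ i, 1 ≤ i → i ≤ ℓ → α i ≠ 0)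
    (hβne : ∀ i, 1 ≤ i → i ≤ ℓ → β i ≠ 0)
    (hdesc : ∀ i, 1 ≤ i → i ≤ ℓ → (R (i + 1)).degree < (R i).degree)
    (hrec : ∀ i, 1 ≤ i → i ≤ ℓ → α i • R (i - 1) = Q i * R i + β i • R (i + 1))
    (hα : ∀ i, 1 ≤ i → i ≤ ℓ → α i = (R i).leadingCoeff ^ (d (i - 1) - d i + 1))
    (hψ1 : ψ 1 = -1)
    (hψ : ∀ i, 2 ≤ i → i ≤ ℓ →
      ψ i = (-(R (i - 1)).leadingCoeff) ^ (d (i - 2) - d (i - 1)) /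
        ψ (i - 1) ^ (d (i - 2) - d (i - 1) - 1))
    (hβ1 : β 1 = (-1) ^ (d 0 - d 1 + 1))
    (hβ : ∀ i, 2 ≤ i → i ≤ ℓ →
      β i = -(R (i - 1)).leadingCoeff * ψ i ^ (d (i - 1) - d i))
    (hR' : ∀ i, i ≤ ℓ + 1 → (R' i).map (algebraMap D (FractionRing D)) = R i)
    -- the scaling factors `γ i` and the scaled sequence `R̃ i = (γ i)⁻¹ • R i`
    (γ : ℕ → FractionRing D) (hγ0 : γ 0 = 1) (hγ1 : γ 1 = 1)
    (hγne : ∀ i, i ≤ ℓ + 1 → γ i ≠ 0)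
    (Rt : ℕ → Polynomial (FractionRing D))
    (hRt : ∀ i, i ≤ ℓ + 1 → Rt i = (γ i)⁻¹ • R i)
    -- the new multipliers `α̃ i`, `β̃ i` and the auxiliary sequence `ψ̃ i`
    (αt βt ψt : ℕ → FractionRing D)
    (hαt : ∀ i, 1 ≤ i → i ≤ ℓ →
      αt i = (Rt i).leadingCoeff ^ (d (i - 1) - d i + 1))
    (hψt1 : ψt 1 = -1)
    (hψt : ∀ i, 2 ≤ i → i ≤ ℓ →
      ψt i = (-(γ (i - 1) * (Rt (i - 1)).leadingCoeff)) ^ (d (i - 2) - d (i - 1)) /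
        ψt (i - 1) ^ (d (i - 2) - d (i - 1) - 1))
    (hβt1 : βt 1 = (-1) ^ (d 0 - d 1 + 1) * γ 2)
    (hβt : ∀ i, 2 ≤ i → i ≤ ℓ →
      βt i = -(Rt (i - 1)).leadingCoeff * ψt i ^ (d (i - 1) - d i) /
        γ i ^ (d (i - 1) - d i + 1) * γ (i + 1)) :
    ∀ i, 1 ≤ i → i ≤ ℓ →
      αt i ≠ 0 ∧ βt i ≠ 0 ∧ (Rt (i + 1)).degree < (Rt i).degree ∧
      ∃ Qt : Polynomial (FractionRing D),
        αt i • Rt (i - 1) = Qt * Rt i + βt i • Rt (i + 1) := by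
  have hlc : ∀ i, i ≤ ℓ + 1 → (Rt i).leadingCoeff = (γ i)⁻¹ * (R i).leadingCoeff := by
    intro i hi
    rw [hRt i hi, Polynomial.smul_eq_C_mul, Polynomial.leadingCoeff_mul,
      Polynomial.leadingCoeff_C]
  have hψeq : ∀ i, 1 ≤ i → i ≤ ℓ → ψt i = ψ i := by
    intro i hi
    induction i, hi using Nat.le_induction with
    | base => intro _; rw [hψ1, hψt1]
    | succ n hn ih =>
      intro h
      rw [hψ (n + 1) (by omega) h, hψt (n + 1) (by omega) h]
      simp only [Nat.add_sub_cancel]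
      rw [ih (by omega), hlc n (by omega), mul_inv_cancel_left₀ (hγne n (by omega))]
  intro i h1 hi
  have g0 := hγne (i - 1) (by omega)
  have g1 := hγne i (by omega)
  have g2 := hγne (i + 1) (by omega)
  have hαe : αt i = ((γ i)⁻¹) ^ (d (i - 1) - d i + 1) * α i := by
    rw [hαt i h1 hi, hα i h1 hi, hlc i (by omega), mul_pow]
  have hβe : βt i = γ (i + 1) * ((γ i)⁻¹) ^ (d (i - 1) - d i + 1) * (γ (i - 1))⁻¹ * β i := by
    rcases Nat.lt_or_ge i 2 with h | h
    · obtain rfl : i = 1 := by omega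
      rw [hβt1, hβ1]
      simp [hγ0, hγ1, mul_comm]
    · rw [hβt i h hi, hβ i h hi, hψeq i h1 hi, hlc (i - 1) (by omega), inv_pow, div_eq_mul_inv]
      ring
  have ha := hαne i h1 hi
  have hb := hβne i h1 hi
  refine ⟨?_, ?_, ?_, ?_⟩
  · rw [hαe]
    exact mul_ne_zero (pow_ne_zero _ (inv_ne_zero g1)) ha
  · rw [hβe]
    exact mul_ne_zero (mul_ne_zero (mul_ne_zero g2 (pow_ne_zero _ (inv_ne_zero g1)))
      (inv_ne_zero g0)) hb
  · rw [hRt i (by omega), hRt (i + 1) (by omega), Polynomial.smul_eq_C_mul,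
      Polynomial.smul_eq_C_mul, Polynomial.degree_C_mul (inv_ne_zero g1),
      Polynomial.degree_C_mul (inv_ne_zero g2)]
    exact hdesc i h1 hi
  · refine ⟨(((γ i)⁻¹) ^ (d (i - 1) - d i + 1) * (γ (i - 1))⁻¹ * γ i) • Q i, ?_⟩
    rw [hRt i (by omega), hRt (i + 1) (by omega), hRt (i - 1) (by omega), hαe, hβe]
    have e := congrArg
      (fun p => (((γ i)⁻¹) ^ (d (i - 1) - d i + 1) * (γ (i - 1))⁻¹) • p) (hrec i h1 hi)
    simp only [smul_add, smul_smul] at e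
    rw [smul_smul, smul_smul, smul_mul_smul_comm, mul_inv_cancel_right₀ g1]
    convert e using 2
    · ring
    · congr 1
      field_simp
end
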